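/- arXiv:2412.20797 — 5 statements merged into one kernel-verified Lean document; each statement's English description precedes it below -/
import Mathlib

section
/- Let A be a commutative ring, f(u) = Σ_{i=0}^n a_{2n-2i} u^{2i} monic in u², and B = SSplit_A(f) the signed splitting ring. If the discriminant Δ = 4^n η₁²⋯η_n² ∏_{i<j}(η_i²−η_j²)² of f (an element of A) is a unit of A, then the map A → B is étale (i.e., flat, of finite presentation, and unramified). -/
open MvPolynomial

noncomputable def esymmSq (A : Type*) [CommRing A] (n i : ℕ) : MvPolynomial (Fin n) A :=
  ∑ s ∈ Finset.powersetCard i (Finset.univ : Finset (Fin n)), ∏ j ∈ s, X j ^ 2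

noncomputable def ssplitIdeal (A : Type*) [CommRing A] (n : ℕ) (a : ℕ → A) :
    Ideal (MvPolynomial (Fin n) A) :=
  Ideal.span (Set.range fun i : Fin n =>
    C (a (2 * (i.1 + 1))) - (-1 : MvPolynomial (Fin n) A) ^ (i.1 + 1) * esymmSq A n (i.1 + 1))

/-- The signed splitting ring `SSplit_A(f) = A[η₁,…,η_n]/I`. -/
abbrev SSplit (A : Type*) [CommRing A] (n : ℕ) (a : ℕ → A) : Type _ :=
  MvPolynomial (Fin n) A ⧸ ssplitIdeal A n a

/-- The classes `η i` in the signed splitting ring. -/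
noncomputable def ssplitEta (A : Type*) [CommRing A] (n : ℕ) (a : ℕ → A) (i : Fin n) :
    SSplit A n a :=
  Ideal.Quotient.mk (ssplitIdeal A n a) (X i)

/-- Partial elementary symmetric polynomial in the squares of the variables in `s`. -/
noncomputable def esymmSqOn (A : Type*) [CommRing A] (n : ℕ) (s : Finset (Fin n)) (i : ℕ) :
    MvPolynomial (Fin n) A :=
  ∑ t ∈ Finset.powersetCard i s, ∏ j ∈ t, X j ^ 2

lemma pderiv_prod_sq_of_notMem (A : Type*) [CommRing A] (n : ℕ) (i : Fin n) (t : Finset (Fin n))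
    (hi : i ∉ t) : pderiv i (∏ j ∈ t, (X j : MvPolynomial (Fin n) A) ^ 2) = 0 := by
  induction t using Finset.induction_on with
  | empty => simp
  | insert k t hk ih =>
    rw [Finset.mem_insert, not_or] at hi
    rw [Finset.prod_insert hk, Derivation.leibniz, ih hi.2, Derivation.leibniz_pow,
      pderiv_X_of_ne (Ne.symm hi.1)]
    simp

lemma pderiv_esymmSqOn_of_notMem (A : Type*) [CommRing A] (n : ℕ) (i : Fin n)
    (s : Finset (Fin n)) (hi : i ∉ s) (j : ℕ) : pderiv i (esymmSqOn A n s j) = 0 := by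
  unfold esymmSqOn
  rw [map_sum]
  refine Finset.sum_eq_zero fun t ht => pderiv_prod_sq_of_notMem A n i t fun h => hi ?_
  exact (Finset.mem_powersetCard.1 ht).1 h

lemma esymmSqOn_insert (A : Type*) [CommRing A] (n : ℕ) (i : Fin n)
    (s : Finset (Fin n)) (hi : i ∉ s) (j : ℕ) :
    esymmSqOn A n (insert i s) (j + 1) = esymmSqOn A n s (j + 1) + X i ^ 2 * esymmSqOn A n s j := by
  unfold esymmSqOn
  rw [Finset.powersetCard_succ_insert hi, Finset.sum_union, Finset.sum_image, Finset.mul_sum]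
  · congr 1
    refine Finset.sum_congr rfl fun t ht => ?_
    rw [Finset.prod_insert fun h => hi ((Finset.mem_powersetCard.1 ht).1 h)]
  · intro t ht u hu h
    have h1 : i ∉ t := fun h => hi ((Finset.mem_powersetCard.1 ht).1 h)
    have h2 : i ∉ u := fun h => hi ((Finset.mem_powersetCard.1 hu).1 h)
    rw [← Finset.erase_insert h1, ← Finset.erase_insert h2, h]
  · rw [Finset.disjoint_left]
    intro t ht ht'
    obtain ⟨u, -, rfl⟩ := Finset.mem_image.1 ht'
    exact hi ((Finset.mem_powersetCard.1 ht).1 (Finset.mem_insert_self _ _))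

lemma pderiv_esymmSq (A : Type*) [CommRing A] (n : ℕ) (i : Fin n) (j : ℕ) :
    pderiv i (esymmSq A n (j + 1)) = 2 * X i * esymmSqOn A n (Finset.univ.erase i) j := by
  have h : esymmSq A n (j + 1) = esymmSqOn A n (insert i (Finset.univ.erase i)) (j + 1) := by
    rw [Finset.insert_erase (Finset.mem_univ i)]; rfl
  rw [h, esymmSqOn_insert A n i _ (Finset.notMem_erase _ _), map_add, Derivation.leibniz,
    pderiv_esymmSqOn_of_notMem A n i _ (Finset.notMem_erase _ _),
    pderiv_esymmSqOn_of_notMem A n i _ (Finset.notMem_erase _ _), Derivation.leibniz_pow,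
    pderiv_X_self]
  simp
  ring

lemma prod_sub_sq (A : Type*) [CommRing A] (n : ℕ) (s : Finset (Fin n))
    (T : MvPolynomial (Fin n) A) :
    ∏ k ∈ s, (T - X k ^ 2) =
      ∑ j ∈ Finset.range (s.card + 1), (-1) ^ j * esymmSqOn A n s j * T ^ (s.card - j) := by
  have h : ∏ k ∈ s, (T - X k ^ 2) = ∏ k ∈ s, (-(X k ^ 2) + T) :=
    Finset.prod_congr rfl fun k _ => by ring
  rw [h, Finset.prod_add, Finset.sum_powerset]
  refine Finset.sum_congr rfl fun j _ => ?_
  rw [esymmSqOn, Finset.mul_sum, Finset.sum_mul]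
  refine Finset.sum_congr rfl fun t ht => ?_
  obtain ⟨h1, h2⟩ := Finset.mem_powersetCard.1 ht
  rw [Finset.prod_neg, h2, Finset.prod_const, Finset.card_sdiff_of_subset h1, h2]

/-- The Jacobian matrix times a Vandermonde matrix is diagonal. -/
lemma jac_mul_vdm (A : Type*) [CommRing A] (n : ℕ) (a : ℕ → A) :
    (Matrix.of fun i j : Fin n => pderiv i (C (a (2 * (j.1 + 1))) -
        (-1 : MvPolynomial (Fin n) A) ^ (j.1 + 1) * esymmSq A n (j.1 + 1))) *
      (Matrix.of fun j l : Fin n => ((X l : MvPolynomial (Fin n) A) ^ 2) ^ (n - 1 - j.1)) =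
    Matrix.diagonal fun i : Fin n => 2 * X i * ∏ k ∈ Finset.univ.erase i, (X i ^ 2 - X k ^ 2) := by
  ext1 i l
  have hn : n - 1 + 1 = n := by have := i.2; omega
  have hc : (Finset.univ.erase i).card = n - 1 := by simp
  have key := prod_sub_sq A n (Finset.univ.erase i) (X l ^ 2)
  rw [hc, hn, ← Fin.sum_univ_eq_sum_range
    (fun j => (-1) ^ j * esymmSqOn A n (Finset.univ.erase i) j * (X l ^ 2) ^ (n - 1 - j))] at key
  have h1 : ∀ j : Fin n, pderiv i (C (a (2 * (j.1 + 1))) -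
        (-1 : MvPolynomial (Fin n) A) ^ (j.1 + 1) * esymmSq A n (j.1 + 1)) =
      2 * X i * ((-1) ^ j.1 * esymmSqOn A n (Finset.univ.erase i) j.1) := by
    intro j
    have h2 : (-1 : MvPolynomial (Fin n) A) ^ (j.1 + 1) = C ((-1) ^ (j.1 + 1)) := by simp
    rw [map_sub, pderiv_C, h2, pderiv_C_mul, pderiv_esymmSq, ← h2]
    ring
  rw [Matrix.mul_apply]
  simp only [Matrix.of_apply, h1]
  have h3 : ∑ j : Fin n, 2 * X i * ((-1) ^ j.1 * esymmSqOn A n (Finset.univ.erase i) j.1) *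
      (X l ^ 2) ^ (n - 1 - j.1) =
      2 * X i * ∏ k ∈ Finset.univ.erase i, ((X l : MvPolynomial (Fin n) A) ^ 2 - X k ^ 2) := by
    rw [key, Finset.mul_sum]
    exact Finset.sum_congr rfl fun j _ => by ring
  rw [h3]
  by_cases hil : i = l
  · subst hil
    rw [Matrix.diagonal_apply_eq]
  · rw [Matrix.diagonal_apply_ne _ hil, Finset.prod_eq_zero (i := l), mul_zero]
    · simp [Ne.symm hil]
    · ring

/-- If the discriminant `Δ = 4^n η₁²⋯η_n² ∏_{i<j} (η_i² - η_j²)²` of `f` (an element of `A`)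
is a unit of `A`, then `A → SSplit_A(f)` is étale, i.e. flat, of finite presentation and
(formally) unramified. -/
theorem ssplit_etale_of_discriminant_unit (A : Type*) [CommRing A] [IsNoetherianRing A]
    (n : ℕ) (a : ℕ → A) (ha : a 0 = 1) (Δ : A)
    (hΔ : algebraMap A (SSplit A n a) Δ =
      4 ^ n * (∏ i : Fin n, ssplitEta A n a i ^ 2) *
        ∏ p ∈ Finset.univ.filter (fun p : Fin n × Fin n => p.1 < p.2),
          (ssplitEta A n a p.1 ^ 2 - ssplitEta A n a p.2 ^ 2) ^ 2)
    (hunit : IsUnit Δ) :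
    Module.Flat A (SSplit A n a) ∧ Algebra.FinitePresentation A (SSplit A n a) ∧
      Algebra.FormallyUnramified A (SSplit A n a) := by
  have hu := hunit.map (algebraMap A (SSplit A n a))
  rw [hΔ, IsUnit.mul_iff, IsUnit.mul_iff] at hu
  obtain ⟨⟨hu4, huη⟩, hud⟩ := hu
  have hη : ∀ i, IsUnit (ssplitEta A n a i) := fun i =>
    (isUnit_pow_iff two_ne_zero).1
      (isUnit_of_dvd_unit (Finset.dvd_prod_of_mem (fun i => ssplitEta A n a i ^ 2)
        (Finset.mem_univ i)) huη)
  have hlt : ∀ i k : Fin n, i < k →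
      IsUnit (ssplitEta A n a i ^ 2 - ssplitEta A n a k ^ 2) := fun i k hik =>
    (isUnit_pow_iff two_ne_zero).1
      (isUnit_of_dvd_unit (Finset.dvd_prod_of_mem
        (fun p : Fin n × Fin n => (ssplitEta A n a p.1 ^ 2 - ssplitEta A n a p.2 ^ 2) ^ 2)
        (a := (i, k)) (by simpa using hik)) hud)
  have hne : ∀ i k : Fin n, k ≠ i →
      IsUnit (ssplitEta A n a i ^ 2 - ssplitEta A n a k ^ 2) := by
    intro i k hik
    rcases lt_or_gt_of_ne hik with h | h
    · rw [← neg_sub]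
      exact (hlt k i h).neg
    · exact hlt i k h
  have h2 : ∀ _ : Fin n, IsUnit (2 : SSplit A n a) := by
    intro i
    have hn : n ≠ 0 := by have := i.2; omega
    have h4 : IsUnit (4 : SSplit A n a) := (isUnit_pow_iff hn).1 hu4
    refine isUnit_of_dvd_unit ⟨2, ?_⟩ h4
    norm_num
  have hdet : IsUnit (Ideal.Quotient.mk (ssplitIdeal A n a)
      (Matrix.of fun i j : Fin n => pderiv i (C (a (2 * (j.1 + 1))) -
        (-1 : MvPolynomial (Fin n) A) ^ (j.1 + 1) * esymmSq A n (j.1 + 1))).det) := by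
    have h := congrArg (fun M => Ideal.Quotient.mk (ssplitIdeal A n a) (Matrix.det M))
      (jac_mul_vdm A n a)
    simp only [Matrix.det_mul, map_mul, Matrix.det_diagonal, map_prod] at h
    refine isUnit_of_mul_isUnit_left (M := SSplit A n a) (y := Ideal.Quotient.mk (ssplitIdeal A n a)
      (Matrix.of fun j l : Fin n => ((X l : MvPolynomial (Fin n) A) ^ 2) ^ (n - 1 - j.1)).det) ?_
    rw [h]
    refine IsUnit.prod_iff.2 fun i _ => ?_
    refine ((?_ : IsUnit _).mul (hη i)).mul (IsUnit.prod_iff.2 fun k hk => ?_)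
    · rw [map_ofNat]
      exact h2 i
    · simpa [ssplitEta] using hne i k (Finset.ne_of_mem_erase hk)
  let P : Algebra.PreSubmersivePresentation A (SSplit A n a) (Fin n) (Fin n) :=
    Algebra.PreSubmersivePresentation.naive (R := A) (v := fun i : Fin n =>
      C (a (2 * (i.1 + 1))) - (-1 : MvPolynomial (Fin n) A) ^ (i.1 + 1) * esymmSq A n (i.1 + 1))
      id Function.injective_id
  have hP : IsUnit P.jacobian := by
    rw [P.jacobian_eq_jacobiMatrix_det]
    have hM : P.jacobiMatrix = Matrix.of fun i j : Fin n => pderiv i (C (a (2 * (j.1 + 1))) -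
        (-1 : MvPolynomial (Fin n) A) ^ (j.1 + 1) * esymmSq A n (j.1 + 1)) := by
      ext1 i j
      rw [P.jacobiMatrix_apply]
      rfl
    rw [hM]
    exact hdet
  let Q : Algebra.SubmersivePresentation A (SSplit A n a) (Fin n) (Fin n) :=
    { P with jacobian_isUnit := hP }
  have : Algebra.IsStandardSmoothOfRelativeDimension 0 A (SSplit A n a) :=
    ⟨⟨Fin n, Fin n, inferInstance, inferInstance, Q, by simp [Algebra.Presentation.dimension]⟩⟩
  have het : Algebra.Etale A (SSplit A n a) := inferInstance
  exact ⟨inferInstance, inferInstance, inferInstance⟩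
end

section
/- Let A be a noetherian reduced commutative ring, f monic in u² of degree 2n over A, and B its signed splitting ring. If the discriminant Δ of f is a non-zerodivisor in A, then B is reduced. -/
open MvPolynomial

lemma aux_span_step {A B : Type*} [CommRing A] [CommRing B] [Nontrivial B] [Algebra A B]
    (V : Subalgebra A B) (s : Finset B)
    (hs : Subalgebra.toSubmodule V ≤ Submodule.span A (s : Set B)) (x : B)
    (g : Polynomial V) (hg : g.Monic) (hx : Polynomial.aeval x g = 0) :
    ∃ t : Finset B, t.card ≤ s.card * g.natDegree ∧
      Subalgebra.toSubmodule V * Subalgebra.toSubmodule (Algebra.adjoin A {x}) ≤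
        Submodule.span A (t : Set B) := by
  classical
  refine ⟨Finset.image₂ (· * ·) s ((Finset.range g.natDegree).image (x ^ ·)), ?_, ?_⟩
  · refine (Finset.card_image₂_le _ _ _).trans ?_
    exact Nat.mul_le_mul_left _ (Finset.card_image_le.trans (by simp))
  have hg1 : g ≠ 1 := by
    rintro rfl
    simp at hx
  rw [Submodule.mul_le]
  intro v hv w hw
  rw [Subalgebra.mem_toSubmodule, Algebra.adjoin_singleton_eq_range_aeval] at hw
  obtain ⟨p, rfl⟩ := hw
  have h1 : Polynomial.aeval x p =
      Polynomial.aeval x ((p.map (algebraMap A V)) %ₘ g) := by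
    have h2 := Polynomial.modByMonic_add_div (p.map (algebraMap A V)) g
    have h3 := congrArg (Polynomial.aeval x) h2
    rw [map_add, map_mul, hx, zero_mul, add_zero, Polynomial.aeval_map_algebraMap] at h3
    exact h3.symm
  change v * Polynomial.aeval x p ∈ _
  rw [h1, Polynomial.aeval_eq_sum_range' (Polynomial.natDegree_modByMonic_lt _ hg hg1),
    Finset.mul_sum]
  refine Submodule.sum_mem _ fun i hi => ?_
  set c := ((p.map (algebraMap A V)) %ₘ g).coeff i
  have h4 : v * (c : B) ∈ Submodule.span A (s : Set B) := hs (V.mul_mem hv c.2)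
  have h5 : v * (c • x ^ i) = v * (c : B) * x ^ i := by
    rw [Subalgebra.smul_def, smul_eq_mul, mul_assoc]
  rw [h5]
  have h6 : (v * (c : B)) * x ^ i ∈ Submodule.span A (s : Set B) *
      Submodule.span A (((Finset.range g.natDegree).image (x ^ ·) : Finset B) : Set B) :=
    Submodule.mul_mem_mul h4 (Submodule.subset_span (by
      simp only [Finset.coe_image, Set.mem_image]
      exact ⟨i, hi, rfl⟩))
  rw [Submodule.span_mul_span] at h6
  rwa [Finset.coe_image₂]

lemma aux_coeff {R : Type*} [CommRing R] (n k : ℕ) (hk : k ≤ n) (d : Fin n → R) :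
    (∏ j, (Polynomial.X - Polynomial.C (d j))).coeff (n - k) =
      (-1) ^ k * ∑ s ∈ Finset.powersetCard k (Finset.univ : Finset (Fin n)), ∏ j ∈ s, d j := by
  have h := Multiset.prod_X_sub_C_coeff ((Finset.univ : Finset (Fin n)).1.map d) (k := n - k)
    (by simp)
  rw [Finset.esymm_map_val] at h
  simp only [Multiset.map_map, Multiset.card_map, Finset.card_val, Finset.card_univ,
    Fintype.card_fin, Nat.sub_sub_self hk] at h
  exact h

/-- the polynomial in `T = u^2` -/
noncomputable def auxPoly (A : Type*) [CommRing A] (n : ℕ) (a : ℕ → A) : Polynomial A :=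
  ∑ i ∈ Finset.range (n + 1), Polynomial.C (a (2 * i)) * Polynomial.X ^ (n - i)

lemma auxPoly_coeff (A : Type*) [CommRing A] (n : ℕ) (a : ℕ → A) (k : ℕ) (hk : k ≤ n) :
    (auxPoly A n a).coeff (n - k) = a (2 * k) := by
  unfold auxPoly
  rw [Polynomial.finsetSum_coeff, Finset.sum_eq_single k]
  · simp
  · intro b hb hbk
    rw [Polynomial.coeff_C_mul_X_pow, if_neg]
    simp at hb
    omega
  · intro h
    simp at h
    omega

lemma auxPoly_natDegree (A : Type*) [CommRing A] (n : ℕ) (a : ℕ → A) :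
    (auxPoly A n a).natDegree ≤ n := by
  unfold auxPoly
  refine Polynomial.natDegree_sum_le_of_forall_le _ _ fun i _ => ?_
  exact (Polynomial.natDegree_C_mul_X_pow_le _ _).trans (Nat.sub_le _ _)

lemma aux_iff {A R : Type*} [CommRing A] [CommRing R] [Nontrivial R] (φ : A →+* R) (n : ℕ)
    (a : ℕ → A)
    (ha : a 0 = 1) (d : Fin n → R) :
    (auxPoly A n a).map φ = ∏ j, (Polynomial.X - Polynomial.C (d j)) ↔
    ∀ i : Fin n, φ (a (2 * (i.1 + 1))) = (-1) ^ (i.1 + 1) *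
      ∑ s ∈ Finset.powersetCard (i.1 + 1) (Finset.univ : Finset (Fin n)), ∏ j ∈ s, d j := by
  constructor
  · intro h i
    have hi : i.1 + 1 ≤ n := i.2
    rw [← aux_coeff n _ hi, ← h, Polynomial.coeff_map, auxPoly_coeff _ _ _ _ hi]
  · intro h
    ext m
    by_cases hm : m ≤ n
    · obtain ⟨k, hk, rfl⟩ : ∃ k, k ≤ n ∧ m = n - k := ⟨n - m, by omega, by omega⟩
      rw [aux_coeff n k hk, Polynomial.coeff_map, auxPoly_coeff _ _ _ _ hk]
      rcases k with _ | k
      · simp [ha]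
      · exact h ⟨k, hk⟩
    · rw [Polynomial.coeff_eq_zero_of_natDegree_lt, Polynomial.coeff_eq_zero_of_natDegree_lt]
      · rw [Polynomial.natDegree_prod_of_monic _ _ fun j _ => Polynomial.monic_X_sub_C _]
        simp
        omega
      · exact (Polynomial.natDegree_map_le.trans (auxPoly_natDegree A n a)).trans_lt (by omega)

lemma aux_eta (A : Type*) [CommRing A] (n : ℕ) (a : ℕ → A) (ha : a 0 = 1)
    [Nontrivial (SSplit A n a)] :
    (auxPoly A n a).map (algebraMap A (SSplit A n a)) =
      ∏ j, (Polynomial.X - Polynomial.C (ssplitEta A n a j ^ 2)) := by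
  rw [aux_iff _ _ _ ha]
  intro i
  have h : Ideal.Quotient.mk (ssplitIdeal A n a) (C (a (2 * (i.1 + 1))) -
      (-1 : MvPolynomial (Fin n) A) ^ (i.1 + 1) * esymmSq A n (i.1 + 1)) = 0 := by
    rw [Ideal.Quotient.eq_zero_iff_mem]
    exact Ideal.subset_span ⟨i, rfl⟩
  rw [map_sub, sub_eq_zero] at h
  simp only [esymmSq, map_mul, map_pow, map_sum, map_prod, map_neg, map_one] at h
  exact h

lemma aux_point {A K : Type*} [CommRing A] [Field K] [Algebra A K] (n : ℕ) (a : ℕ → A)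
    (ha : a 0 = 1) (c : Fin n → K)
    (h : (auxPoly A n a).map (algebraMap A K) =
      ∏ j, (Polynomial.X - Polynomial.C (c j ^ 2))) :
    ∃ χ : SSplit A n a →ₐ[A] K, ∀ i, χ (ssplitEta A n a i) = c i := by
  rw [aux_iff _ _ _ ha] at h
  refine ⟨Ideal.Quotient.liftₐ _ (MvPolynomial.aeval c) ?_, fun i => ?_⟩
  · have : ssplitIdeal A n a ≤ RingHom.ker (MvPolynomial.aeval (R := A) c) := by
      unfold ssplitIdeal
      rw [Ideal.span_le]
      rintro _ ⟨i, rfl⟩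
      simp only [SetLike.mem_coe, RingHom.mem_ker, esymmSq, map_sub, map_mul, map_pow, map_sum,
        map_prod, map_neg, map_one, MvPolynomial.aeval_X, MvPolynomial.aeval_C]
      rw [h i, sub_self]
    exact fun x hx => this hx
  · exact MvPolynomial.aeval_X c i

lemma aux_span (A : Type*) [CommRing A] (n : ℕ) (a : ℕ → A) (ha : a 0 = 1)
    [Nontrivial (SSplit A n a)] (k : ℕ) (hk : k ≤ n) :
    ∃ s : Finset (SSplit A n a), s.card ≤ ∏ i ∈ Finset.range k, (2 * (n - i)) ∧
      Subalgebra.toSubmodule (Algebra.adjoin A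
        (ssplitEta A n a '' {j | j.1 < k})) ≤ Submodule.span A (s : Set (SSplit A n a)) := by
  classical
  induction k with
  | zero =>
    refine ⟨{1}, by simp, ?_⟩
    simp [Algebra.toSubmodule_bot, Submodule.one_eq_span]
  | succ k ih =>
    obtain ⟨s, hs, hs'⟩ := ih (by omega)
    set η := ssplitEta A n a with hη
    set V := Algebra.adjoin A (η '' {j | j.1 < k}) with hV
    have hmem : ∀ j : Fin n, j.1 < k → η j ∈ V := fun j hj =>
      Algebra.subset_adjoin ⟨j, hj, rfl⟩
    have hmon1 : (∏ j ∈ Finset.univ.filter (fun j : Fin n => j.1 < k),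
      (Polynomial.X - Polynomial.C (η j ^ 2))).Monic :=
        Polynomial.monic_prod_of_monic _ _ fun j _ => Polynomial.monic_X_sub_C _
    have hmon2 : (∏ j ∈ Finset.univ.filter (fun j : Fin n => ¬ j.1 < k),
      (Polynomial.X - Polynomial.C (η j ^ 2))).Monic :=
        Polynomial.monic_prod_of_monic _ _ fun j _ => Polynomial.monic_X_sub_C _
    have hlift : (∏ j ∈ Finset.univ.filter (fun j : Fin n => ¬ j.1 < k),
      (Polynomial.X - Polynomial.C (η j ^ 2))) ∈ Polynomial.lifts (algebraMap V (SSplit A n a)) := by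
      let D : Polynomial V := ∏ j : {j : Fin n // j.1 < k},
        (Polynomial.X - Polynomial.C (⟨η j, hmem j j.2⟩ ^ 2))
      have hD : D.Monic := Polynomial.monic_prod_of_monic _ _ fun j _ => Polynomial.monic_X_sub_C _
      have hDm : D.map (algebraMap V (SSplit A n a)) =
        ∏ j ∈ Finset.univ.filter (fun j : Fin n => j.1 < k),
          (Polynomial.X - Polynomial.C (η j ^ 2)) := by
        simp only [D, Polynomial.map_prod, Polynomial.map_sub, Polynomial.map_X, Polynomial.map_C,
          map_pow]
        rw [← Finset.prod_subtype_eq_prod_filter]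
        simp
      refine ⟨((auxPoly A n a).map (algebraMap A V)) /ₘ D, ?_⟩
      rw [Polynomial.coe_mapRingHom, Polynomial.map_divByMonic _ hD, Polynomial.map_map,
        ← IsScalarTower.algebraMap_eq, aux_eta A n a ha, hDm,
        ← Finset.prod_filter_mul_prod_filter_not Finset.univ (fun j : Fin n => j.1 < k)]
      exact Polynomial.mul_divByMonic_cancel_left _ hmon1
    obtain ⟨g, hg1, hg2, hg3⟩ := Polynomial.lifts_and_natDegree_eq_and_monic hlift hmon2
    have hgdeg : g.natDegree = n - k := by
      rw [hg2, Polynomial.natDegree_prod_of_monic _ _ fun j _ => Polynomial.monic_X_sub_C _]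
      simp only [Polynomial.natDegree_X_sub_C, Finset.sum_const, smul_eq_mul, mul_one]
      have := Finset.card_filter_add_card_filter_not (s := (Finset.univ : Finset (Fin n)))
        (fun j : Fin n => j.1 < k)
      have h2 : (Finset.univ.filter (fun j : Fin n => j.1 < k)).card = k := by
        rw [Fin.card_filter_val_lt]; omega
      simp only [Finset.card_univ, Fintype.card_fin] at this
      omega
    let k' : Fin n := ⟨k, by omega⟩
    have hG : (Polynomial.expand V 2 g).Monic := hg3.expand (by norm_num)
    obtain ⟨t, ht, ht'⟩ := aux_span_step V s hs' (η k') (Polynomial.expand V 2 g) hG (by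
      rw [Polynomial.expand_aeval, ← Polynomial.eval_map_algebraMap, hg1, Polynomial.eval_prod]
      refine Finset.prod_eq_zero (i := k') (by simp [k']) (by simp))
    refine ⟨t, ht.trans ?_, ?_⟩
    · rw [Polynomial.natDegree_expand, hgdeg, Finset.prod_range_succ, mul_comm (n - k)]
      exact Nat.mul_le_mul_right _ hs
    · rw [← Algebra.adjoin_union_coe_submodule] at ht'
      refine le_trans ?_ ht'
      rw [Subalgebra.toSubmodule.map_rel_iff]
      apply Algebra.adjoin_mono
      rintro _ ⟨j, hj, rfl⟩
      have hj' : j.1 < k + 1 := hj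
      by_cases h : j.1 < k
      · exact Or.inl ⟨j, h, rfl⟩
      · right
        have : j = k' := Fin.ext (by simp [k']; omega)
        simp [this]

lemma aux_span_top (A : Type*) [CommRing A] (n : ℕ) (a : ℕ → A) (ha : a 0 = 1)
    [Nontrivial (SSplit A n a)] :
    ∃ s : Finset (SSplit A n a), s.card ≤ 2 ^ n * n.factorial ∧
      Submodule.span A (s : Set (SSplit A n a)) = ⊤ := by
  obtain ⟨s, hs, hs'⟩ := aux_span A n a ha n le_rfl
  refine ⟨s, hs.trans (le_of_eq ?_), ?_⟩
  · rw [Finset.prod_mul_distrib, Finset.prod_const, Finset.card_range]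
    congr 1
    rw [← Finset.prod_range_add_one_eq_factorial, ← Finset.prod_range_reflect]
    refine Finset.prod_congr rfl fun i hi => ?_
    simp at hi
    omega
  · rw [eq_top_iff]
    refine le_trans ?_ hs'
    intro b _
    obtain ⟨p, rfl⟩ := Ideal.Quotient.mk_surjective b
    have h : (Ideal.Quotient.mkₐ A (ssplitIdeal A n a)) =
      MvPolynomial.aeval (ssplitEta A n a) := by
      ext i
      simp [ssplitEta]
    have h2 := congrArg (fun f => f p) h
    simp only [Ideal.Quotient.mkₐ_eq_mk] at h2
    rw [h2, Subalgebra.mem_toSubmodule]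
    have : (ssplitEta A n a '' {j | j.1 < n}) = Set.range (ssplitEta A n a) := by
      ext; simp
    rw [this, Algebra.adjoin_range_eq_range_aeval]
    exact ⟨p, rfl⟩

/-- distinct points -/
lemma aux_points {A K : Type*} [CommRing A] [Field K] [IsAlgClosed K] [Algebra A K] (n : ℕ)
    (a : ℕ → A) (ha : a 0 = 1) (Δ : A)
    (hΔ : algebraMap A (SSplit A n a) Δ =
      4 ^ n * (∏ i : Fin n, ssplitEta A n a i ^ 2) *
        ∏ p ∈ Finset.univ.filter (fun p : Fin n × Fin n => p.1 < p.2),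
          (ssplitEta A n a p.1 ^ 2 - ssplitEta A n a p.2 ^ 2) ^ 2)
    (h0 : algebraMap A K Δ ≠ 0) :
    ∃ χ : Equiv.Perm (Fin n) × (Fin n → Bool) → (SSplit A n a →ₐ[A] K),
      Function.Injective χ := by
  have hmonic : ((auxPoly A n a).map (algebraMap A K)).Monic := by
    refine Polynomial.monic_of_natDegree_le_of_coeff_eq_one n
      (Polynomial.natDegree_map_le.trans (auxPoly_natDegree A n a)) ?_
    have := auxPoly_coeff A n a 0 (Nat.zero_le _)
    rw [Polynomial.coeff_map]
    simp only [Nat.sub_zero] at this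
    rw [this]; simp [ha]
  have hdeg : ((auxPoly A n a).map (algebraMap A K)).natDegree = n := by
    refine le_antisymm (Polynomial.natDegree_map_le.trans (auxPoly_natDegree A n a)) ?_
    refine Polynomial.le_natDegree_of_ne_zero ?_
    have := auxPoly_coeff A n a 0 (Nat.zero_le _)
    rw [Polynomial.coeff_map]
    simp only [Nat.sub_zero] at this
    rw [this]; simp [ha]
  have hsplit := IsAlgClosed.splits ((auxPoly A n a).map (algebraMap A K))
  obtain ⟨d, hd⟩ : ∃ d : Fin n → K, (auxPoly A n a).map (algebraMap A K) =
      ∏ j, (Polynomial.X - Polynomial.C (d j)) := by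
    have h1 := hsplit.eq_prod_roots_of_monic hmonic
    have h2 := hsplit.natDegree_eq_card_roots
    rw [hdeg] at h2
    generalize ((auxPoly A n a).map (algebraMap A K)).roots = m at h1 h2
    induction m using Quotient.inductionOn with | _ l => ?_
    have h3 : n = l.length := by simpa using h2
    subst h3
    refine ⟨l.get, ?_⟩
    rw [h1]
    rw [← List.prod_ofFn]
    simp only [List.get_eq_getElem]
    rw [List.ofFn_getElem_eq_map l (fun x => Polynomial.X - Polynomial.C x)]
    simp
  choose c hc using fun j => IsAlgClosed.exists_pow_nat_eq (d j) (n := 2) (by norm_num)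
  simp only [← hc] at hd
  obtain ⟨χ₀, hχ₀⟩ := aux_point n a ha c hd
  have hΔ' := congrArg χ₀ hΔ
  simp only [map_mul, map_prod, map_pow, map_sub, hχ₀, AlgHom.commutes, map_ofNat] at hΔ'
  rw [hΔ'] at h0
  have h4 := left_ne_zero_of_mul (left_ne_zero_of_mul h0)
  have hc0 := right_ne_zero_of_mul (left_ne_zero_of_mul h0)
  have hcd := right_ne_zero_of_mul h0
  rw [Finset.prod_ne_zero_iff] at hc0 hcd
  have hc0' : ∀ i, c i ≠ 0 := fun i => by simpa using hc0 i (Finset.mem_univ _)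
  have hlt : ∀ i j, i < j → c i ^ 2 ≠ c j ^ 2 := fun i j hij h => by
    have := hcd (i, j) (by simpa using hij)
    simp [h] at this
  have hinj : Function.Injective fun i => c i ^ 2 := by
    intro i j h
    by_contra hne
    rcases lt_or_gt_of_ne hne with h' | h'
    · exact hlt _ _ h' h
    · exact hlt _ _ h' h.symm
  have key : ∀ p : Equiv.Perm (Fin n) × (Fin n → Bool), ∃ χ : SSplit A n a →ₐ[A] K,
      ∀ i, χ (ssplitEta A n a i) = (if p.2 i then 1 else -1) * c (p.1 i) := by
    intro p
    refine aux_point n a ha _ ?_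
    rw [hd, ← Equiv.prod_comp p.1]
    refine Finset.prod_congr rfl fun j _ => ?_
    congr 2
    split_ifs <;> ring
  choose χ hχ using key
  refine ⟨χ, ?_⟩
  rintro ⟨σ, e⟩ ⟨τ, e'⟩ h
  have h1 : ∀ i, (if e i then 1 else -1) * c (σ i) = (if e' i then 1 else -1) * c (τ i) := by
    intro i
    have := hχ (σ, e) i
    rw [h, hχ (τ, e') i] at this
    exact this.symm
  have hστ : σ = τ := by
    ext1 i
    apply hinj
    have := congrArg (· ^ 2) (h1 i)
    simp only [mul_pow] at this
    have e1 : ∀ b : Bool, (if b then (1 : K) else -1) ^ 2 = 1 := by intro b; cases b <;> simp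
    simpa [e1] using this
  subst hστ
  have hee : e = e' := by
    funext i
    have h2 := mul_right_cancel₀ (hc0' _) (h1 i)
    have h4' : (4 : K) ≠ 0 := by
      intro h
      rw [h, zero_pow (by have := i.2; omega)] at h4
      exact h4 rfl
    have h22 : (2 : K) ≠ 0 := by
      intro h
      apply h4'
      linear_combination (2 : K) * h
    have hne : (1 : K) ≠ -1 := by
      intro h
      apply h22
      linear_combination h
    cases h5 : e i <;> cases h6 : e' i <;> simp [h5, h6, hne, hne.symm] at h2 ⊢
  rw [hee]

lemma aux_coord {A B K ι : Type*} [CommRing A] [CommRing B] [Algebra A B] [Field K] [Algebra A K]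
    [Fintype ι] (s : Finset B) (hs : Submodule.span A (s : Set B) = ⊤)
    (χ : ι → (B →ₐ[A] K)) (hχ : Function.Injective χ) (hcard : s.card ≤ Fintype.card ι)
    (c : B → A) (hc : ∀ i, χ i (∑ b ∈ s, c b • b) = 0) (b : B) (hb : b ∈ s) :
    algebraMap A K (c b) = 0 := by
  classical
  have hli0 : LinearIndependent K (fun i => (χ i : B → K)) := by
    refine (linearIndependent_monoidHom B K).comp
      (fun i => ((χ i : B →ₐ[A] K) : B →* K)) ?_
    intro i j h
    apply hχ
    ext x
    exact DFunLike.congr_fun h x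
  let v : ι → (s → K) := fun i b => χ i b
  have hli : LinearIndependent K v := by
    rw [Fintype.linearIndependent_iff] at hli0 ⊢
    intro l hl
    apply hli0 l
    funext x
    have hx : x ∈ Submodule.span A (s : Set B) := by rw [hs]; trivial
    simp only [Finset.sum_apply, Pi.smul_apply, smul_eq_mul, Pi.zero_apply]
    induction hx using Submodule.span_induction with
    | mem y hy =>
      have := congrFun hl ⟨y, hy⟩
      simpa [v] using this
    | zero => simp
    | add y z _ _ h1 h2 => simp [mul_add, Finset.sum_add_distrib, h1, h2]
    | smul r y _ h1 =>
      simp only [map_smul, mul_smul_comm, ← Finset.smul_sum, h1, smul_zero]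
  have hcard' : Fintype.card ι = Module.finrank K (s → K) := by
    refine le_antisymm hli.fintype_card_le_finrank ?_
    simpa using hcard
  have hspan := hli.span_eq_top_of_card_eq_finrank' hcard'
  let L : (s → K) →ₗ[K] K := ∑ b : s, (algebraMap A K (c b)) • LinearMap.proj b
  have hL : L = 0 := by
    refine LinearMap.ext_on_range hspan fun i => ?_
    have := hc i
    rw [← Finset.sum_coe_sort] at this
    simpa [L, v, Algebra.smul_def] using this
  have := congrArg (fun f => f (Pi.single ⟨b, hb⟩ 1)) hL
  simpa [L, Pi.single_apply, Algebra.smul_def] using this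

theorem ssplit_reduced (A : Type*) [CommRing A] [IsNoetherianRing A] [IsReduced A]
    (n : ℕ) (a : ℕ → A) (ha : a 0 = 1) (Δ : A)
    (hΔ : algebraMap A (SSplit A n a) Δ =
      4 ^ n * (∏ i : Fin n, ssplitEta A n a i ^ 2) *
        ∏ p ∈ Finset.univ.filter (fun p : Fin n × Fin n => p.1 < p.2),
          (ssplitEta A n a p.1 ^ 2 - ssplitEta A n a p.2 ^ 2) ^ 2)
    (hreg : Δ ∈ nonZeroDivisors A) :
    IsReduced (SSplit A n a) := by
  rcases subsingleton_or_nontrivial (SSplit A n a) with h | h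
  · exact ⟨fun x _ => Subsingleton.elim _ _⟩
  obtain ⟨s, hs, hspan⟩ := aux_span_top A n a ha
  refine ⟨fun x hx => ?_⟩
  have hxs : x ∈ Submodule.span A (s : Set (SSplit A n a)) := by rw [hspan]; trivial
  rw [Submodule.mem_span_finset] at hxs
  obtain ⟨c, -, rfl⟩ := hxs
  refine Finset.sum_eq_zero fun b hb => ?_
  suffices hcb : c b = 0 by rw [hcb, zero_smul]
  have hmem : c b ∈ sInf (minimalPrimes A) := by
    rw [Submodule.mem_sInf]
    intro (P : Ideal A) hP
    have hPp : Ideal.IsPrime P := hP.1.1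
    have hΔP : Δ ∉ P := fun hmem =>
      Set.disjoint_left.mp (Ideal.disjoint_nonZeroDivisors_of_mem_minimalPrimes hP) hmem hreg
    let K := AlgebraicClosure (FractionRing (A ⧸ P))
    let φ : A →+* K := (algebraMap (FractionRing (A ⧸ P)) K).comp
      ((algebraMap (A ⧸ P) (FractionRing (A ⧸ P))).comp (Ideal.Quotient.mk P))
    have hφ : ∀ y, φ y = 0 ↔ y ∈ P := by
      intro y
      simp only [φ, RingHom.comp_apply]
      rw [map_eq_zero, IsFractionRing.to_map_eq_zero_iff, Ideal.Quotient.eq_zero_iff_mem]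
    let _ : Algebra A K := φ.toAlgebra
    obtain ⟨χ, hχ⟩ := aux_points (K := K) n a ha Δ hΔ (by
      change φ Δ ≠ 0
      rwa [Ne, hφ])
    have := aux_coord s hspan χ hχ (by
      refine hs.trans (le_of_eq ?_)
      simp [Fintype.card_perm, mul_comm]) c (fun i => (hx.map (χ i)).eq_zero) b hb
    exact (hφ _).1 this
  rw [minimalPrimes, Ideal.sInf_minimalPrimes] at hmem
  exact IsNilpotent.eq_zero hmem
end

section
/- Let A be a commutative ring with 2 and n! invertible, and B = SSplit_A(f) the signed splitting ring of a monic polynomial f in u² of degree 2n. Then B is free of rank one as a module over the group algebra A[W_n], where W_n = S_n ⋉ (ℤ/2)^n is the hyperoctahedral group acting by permuting the η_i and flipping their signs. -/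
open MvPolynomial

/-- The permutation action of `S_n` on sign vectors, used to build the hyperoctahedral group. -/
def permSignAction (n : ℕ) : Equiv.Perm (Fin n) →* MulAut (Fin n → ℤˣ) :=
  MonoidHom.mk' (fun σ => MulEquiv.arrowCongr σ (MulEquiv.refl ℤˣ))
    (by intro σ τ; ext v i; rfl)

/-- The hyperoctahedral group `W_n = S_n ⋉ (ℤ/2)^n`. -/
abbrev Hyperoct (n : ℕ) := (Fin n → ℤˣ) ⋊[permSignAction n] Equiv.Perm (Fin n)


universe u v
section PartOne
open Polynomial

theorem aux_nontrivial {A : Type*} [CommRing A] (f : A[X]) (hf : f.Monic)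
    (hd : 0 < f.natDegree) : Nontrivial (AdjoinRoot f) := by
  have hA : Nontrivial A := by
    by_contra h
    rw [not_nontrivial_iff_subsingleton] at h
    have : f = 0 := Subsingleton.elim _ _
    simp [this] at hd
  let b := AdjoinRoot.powerBasisAux' hf
  have : Nonempty (Fin f.natDegree) := ⟨⟨0, hd⟩⟩
  exact b.repr.toEquiv.nontrivial

theorem spanS (n : ℕ) : ∀ (A : Type u) (D : Type v) [CommRing A] [CommRing D] [Algebra A D]
    (f : A[X]) (_ : f.Monic) (_ : f.natDegree = n) (x : Fin n → D)
    (_ : f.map (algebraMap A D) = ∏ i, (Polynomial.X - Polynomial.C (x i)))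
    (_ : Algebra.adjoin A (Set.range x) = ⊤),
    Submodule.span A (Set.range fun j : (i : Fin n) → Fin (i.1 + 1) =>
      ∏ i, x i ^ (j i : ℕ)) = ⊤ := by
  induction n with
  | zero =>
    intro A D _ _ _ f hf hd x hx hgen
    have : Set.range x = ∅ := Set.range_eq_empty x
    rw [this, Algebra.adjoin_empty] at hgen
    have h2 : Subalgebra.toSubmodule (⊥ : Subalgebra A D) = ⊤ := by rw [hgen]; simp
    rw [Algebra.toSubmodule_bot, Submodule.one_eq_span] at h2
    rw [← h2]
    congr 1
    ext z
    simp
  | succ n ih =>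
    intro A D _ _ _ f hf hd x hx hgen
    have h0 : f.eval₂ (algebraMap A D) (x (Fin.last n)) = 0 := by
      rw [← Polynomial.eval_map, hx, Polynomial.eval_prod]
      exact Finset.prod_eq_zero (Finset.mem_univ (Fin.last n)) (by simp)
    have hnt := aux_nontrivial f hf (by omega)
    let alg : Algebra (AdjoinRoot f) D :=
      (AdjoinRoot.lift (algebraMap A D) (x (Fin.last n)) h0).toAlgebra
    have hroot : algebraMap (AdjoinRoot f) D (AdjoinRoot.root f) = x (Fin.last n) :=
      AdjoinRoot.lift_root h0
    have tower : IsScalarTower A (AdjoinRoot f) D :=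
      IsScalarTower.of_algebraMap_eq (fun r => (AdjoinRoot.lift_of h0).symm)
    set g := (f.map (algebraMap A (AdjoinRoot f))) /ₘ
      (Polynomial.X - Polynomial.C (AdjoinRoot.root f)) with hg
    have hmul : (Polynomial.X - Polynomial.C (AdjoinRoot.root f)) * g =
        f.map (algebraMap A (AdjoinRoot f)) := by
      rw [hg, Polynomial.mul_divByMonic_eq_iff_isRoot]
      exact AdjoinRoot.isRoot_root f
    have hgm : g.Monic := by
      have := hf.map (algebraMap A (AdjoinRoot f))
      rw [← hmul] at this
      exact (Polynomial.monic_X_sub_C _).of_mul_monic_left this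
    have hgd : g.natDegree = n := by
      rw [hg, Polynomial.natDegree_divByMonic _ (Polynomial.monic_X_sub_C _), hf.natDegree_map, hd]
      simp
    have hgx : g.map (algebraMap (AdjoinRoot f) D) =
        ∏ i : Fin n, (Polynomial.X - Polynomial.C (x i.castSucc)) := by
      have h := congrArg (Polynomial.map (algebraMap (AdjoinRoot f) D)) hmul
      rw [Polynomial.map_map, ← IsScalarTower.algebraMap_eq, hx, Polynomial.map_mul,
        Fin.prod_univ_castSucc, mul_comm] at h
      simp only [Polynomial.map_sub, Polynomial.map_X, Polynomial.map_C, hroot] at h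
      exact (Polynomial.monic_X_sub_C (x (Fin.last n))).isRegular.right h
    have hgen' : Algebra.adjoin (AdjoinRoot f) (Set.range fun i : Fin n => x i.castSucc) = ⊤ := by
      have : Algebra.adjoin A (Set.range x) ≤ (Algebra.adjoin (AdjoinRoot f)
          (Set.range fun i : Fin n => x i.castSucc)).restrictScalars A := by
        have hm : ∀ i, x i ∈ Algebra.adjoin (AdjoinRoot f)
            (Set.range fun i : Fin n => x i.castSucc) := by
          intro i
          induction i using Fin.lastCases with
          | last =>
            have := Subalgebra.algebraMap_mem (Algebra.adjoin (AdjoinRoot f)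
              (Set.range fun i : Fin n => x i.castSucc)) (AdjoinRoot.root f)
            rwa [hroot] at this
          | cast i => exact Algebra.subset_adjoin (Set.mem_range_self i)
        apply Algebra.adjoin_le
        rintro _ ⟨i, rfl⟩
        exact hm i
      rw [hgen] at this
      rw [eq_top_iff]
      intro z _
      exact this (Algebra.mem_top (x := z))
    have key := ih (AdjoinRoot f) D g hgm hgd _ hgx hgen'
    have hb := (AdjoinRoot.powerBasis' hf).basis.span_eq
    have hs := Submodule.span_smul_of_span_eq_top hb
      (Set.range fun j : (i : Fin n) → Fin (i.1 + 1) => ∏ i, x i.castSucc ^ (j i : ℕ))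
    rw [key, Submodule.restrictScalars_top] at hs
    rw [eq_top_iff, ← hs]
    apply Submodule.span_mono
    rintro _ ⟨_, ⟨k, rfl⟩, _, ⟨j, rfl⟩, rfl⟩
    have hk : k.1 < n + 1 := by
      have := k.2
      simp only [AdjoinRoot.powerBasis'_dim] at this
      omega
    refine ⟨Fin.snoc (α := fun i : Fin (n+1) => Fin (i.1 + 1)) j ⟨k.1, hk⟩, ?_⟩
    simp only [Fin.prod_univ_castSucc, Fin.snoc_castSucc, Fin.snoc_last]
    rw [PowerBasis.basis_eq_pow, AdjoinRoot.powerBasis'_gen, Algebra.smul_def, map_pow, hroot,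
      mul_comm]

theorem exE (n : ℕ) : ∀ (A : Type u) [CommRing A]
    (f : A[X]) (_ : f.Monic) (_ : f.natDegree = n), ∃ (E : Type u) (_ : CommRing E)
      (_ : Algebra A E) (y : Fin n → E) (ι : Type) (_ : Fintype ι) (_ : Module.Basis ι A E),
      Fintype.card ι = 2 ^ n * n.factorial ∧
      f.map (algebraMap A E) = ∏ i, (Polynomial.X - Polynomial.C (y i ^ 2)) ∧
      Algebra.adjoin A (Set.range y) = ⊤ := by
  induction n with
  | zero =>
    intro A _ f hf hd
    refine ⟨A, inferInstance, inferInstance, Fin.elim0, Unit, inferInstance,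
      Module.Basis.singleton Unit A, by simp, ?_, ?_⟩
    · rw [hf.natDegree_eq_zero] at hd
      simp [hd]
    · exact Subsingleton.elim _ _
  | succ n ih =>
    intro A _ f hf hd
    let F := Polynomial.expand A 2 f
    have hF : F.Monic := hf.expand (by norm_num)
    have hFd : F.natDegree = 2 * (n + 1) := by
      simp only [F, Polynomial.natDegree_expand, hd]; ring
    have hnt := aux_nontrivial F hF (by omega)
    have h0 : (f.map (algebraMap A (AdjoinRoot F))).IsRoot (AdjoinRoot.root F ^ 2) := by
      have := AdjoinRoot.isRoot_root F
      simp only [F, Polynomial.IsRoot, Polynomial.map_expand, Polynomial.expand_eval] at this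
      exact this
    set g := (f.map (algebraMap A (AdjoinRoot F))) /ₘ
      (Polynomial.X - Polynomial.C (AdjoinRoot.root F ^ 2)) with hg
    have hmul : (Polynomial.X - Polynomial.C (AdjoinRoot.root F ^ 2)) * g =
        f.map (algebraMap A (AdjoinRoot F)) := by
      rw [hg, Polynomial.mul_divByMonic_eq_iff_isRoot]
      exact h0
    have hgm : g.Monic := by
      have := hf.map (algebraMap A (AdjoinRoot F))
      rw [← hmul] at this
      exact (Polynomial.monic_X_sub_C _).of_mul_monic_left this
    have hgd : g.natDegree = n := by
      rw [hg, Polynomial.natDegree_divByMonic _ (Polynomial.monic_X_sub_C _), hf.natDegree_map, hd]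
      rw [Polynomial.natDegree_X_sub_C]; rfl
    obtain ⟨E, _, _, y, ι, _, b, hc, hp, hgen⟩ := ih (AdjoinRoot F) g hgm hgd
    let alg : Algebra A E := ((algebraMap (AdjoinRoot F) E).comp
      (algebraMap A (AdjoinRoot F))).toAlgebra
    have tower : IsScalarTower A (AdjoinRoot F) E := IsScalarTower.of_algebraMap_eq (fun r => rfl)
    refine ⟨E, inferInstance, alg, Fin.snoc (α := fun _ => E) y
      (algebraMap (AdjoinRoot F) E (AdjoinRoot.root F)),
      Fin F.natDegree × ι, inferInstance, (AdjoinRoot.powerBasisAux' hF).smulTower b, ?_, ?_, ?_⟩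
    · rw [Fintype.card_prod, hc, Fintype.card_fin, hFd, Nat.factorial_succ]; ring
    · rw [IsScalarTower.algebraMap_eq A (AdjoinRoot F) E, ← Polynomial.map_map, ← hmul,
        Polynomial.map_mul, hp, Fin.prod_univ_castSucc, mul_comm]
      simp
    · rw [eq_top_iff]
      set S := Algebra.adjoin A (Set.range (Fin.snoc (α := fun _ => E) y
        (algebraMap (AdjoinRoot F) E (AdjoinRoot.root F)))) with hS
      have hr : ∀ z : AdjoinRoot F, algebraMap (AdjoinRoot F) E z ∈ S := by
        intro z
        have hz : z ∈ Algebra.adjoin A {AdjoinRoot.root F} := by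
          rw [AdjoinRoot.adjoinRoot_eq_top]; trivial
        have : Algebra.adjoin A {AdjoinRoot.root F} ≤
            S.comap (IsScalarTower.toAlgHom A (AdjoinRoot F) E) := by
          apply Algebra.adjoin_le
          rintro _ rfl
          apply Algebra.subset_adjoin
          exact ⟨Fin.last n, by simp⟩
        exact this hz
      intro z _
      have hz : z ∈ Algebra.adjoin (AdjoinRoot F) (Set.range y) := by rw [hgen]; trivial
      induction hz using Algebra.adjoin_induction with
      | mem w hw =>
        obtain ⟨i, rfl⟩ := hw
        exact Algebra.subset_adjoin ⟨i.castSucc, by simp⟩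
      | algebraMap r => exact hr r
      | add _ _ _ _ h1 h2 => exact add_mem (h1 trivial) (h2 trivial)
      | mul _ _ _ _ h1 h2 => exact mul_mem (h1 trivial) (h2 trivial)
end PartOne
section PartTwo

/-- Staircase monomials. -/
noncomputable def stairMon (A : Type*) [CommRing A] (n : ℕ) (j : (i : Fin n) → Fin (i.1 + 1)) :
    MvPolynomial (Fin n) A := ∏ i, X i ^ (j i : ℕ)

theorem stairMon_hom (A : Type*) [CommRing A] (n : ℕ) (j : (i : Fin n) → Fin (i.1 + 1)) :
    (stairMon A n j).IsHomogeneous (∑ i, (j i : ℕ)) :=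
  IsHomogeneous.prod _ _ _ fun i _ => isHomogeneous_X_pow i _

theorem vieta_aux {D : Type*} [CommRing D] (n : ℕ) (x : Fin n → D) :
    ∏ i, (Polynomial.X - Polynomial.C (x i)) = Polynomial.X ^ n + ∑ j ∈ Finset.range n,
      Polynomial.C ((-1) ^ (j + 1) * ∑ s ∈ Finset.powersetCard (j + 1) (Finset.univ : Finset (Fin n)),
        ∏ i ∈ s, x i) * Polynomial.X ^ (n - (j + 1)) := by
  have h := Multiset.prod_X_sub_X_eq_sum_esymm ((Finset.univ : Finset (Fin n)).val.map x)
  simp only [Multiset.map_map, Finset.esymm_map_val, Multiset.card_map, Finset.card_val,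
    Finset.card_univ, Fintype.card_fin] at h
  rw [Finset.sum_range_succ'] at h
  rw [Finset.prod_eq_multiset_prod]
  refine h.trans ?_
  rw [add_comm]
  congr 1
  · simp
  · refine Finset.sum_congr rfl fun j _ => ?_
    simp only [map_mul, map_pow, map_neg, map_one]
    ring

theorem esymm_hom (A : Type*) [CommRing A] (n k : ℕ) : (esymm (Fin n) A k).IsHomogeneous k := by
  unfold esymm
  refine IsHomogeneous.sum _ _ _ fun s hs => ?_
  have := IsHomogeneous.prod s (fun i => (X i : MvPolynomial (Fin n) A)) (fun _ => 1)
    (fun i _ => isHomogeneous_X A i)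
  rw [Finset.mem_powersetCard] at hs
  simpa [hs.2] using this

theorem hc_mul {A : Type*} [CommRing A] {n : ℕ} (q e : MvPolynomial (Fin n) A) (m d : ℕ)
    (he : e.IsHomogeneous m) : ∃ q' : MvPolynomial (Fin n) A,
      (q' = 0 ∨ ∃ k, k + m = d ∧ q'.IsHomogeneous k) ∧
      homogeneousComponent d (q * e) = q' * e := by
  have hh : ∀ k, homogeneousComponent d (homogeneousComponent k q * e) =
      if d = k + m then homogeneousComponent k q * e else 0 := fun k =>
    homogeneousComponent_of_mem ((homogeneousComponent_isHomogeneous k q).mul he)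
  have hs : homogeneousComponent d (q * e) = ∑ k ∈ Finset.range (q.totalDegree + 1),
      if d = k + m then homogeneousComponent k q * e else 0 := by
    conv_lhs => rw [← sum_homogeneousComponent q, Finset.sum_mul, map_sum]
    exact Finset.sum_congr rfl fun k _ => hh k
  by_cases hd : m ≤ d
  · refine ⟨homogeneousComponent (d - m) q, Or.inr ⟨d - m, by omega,
      homogeneousComponent_isHomogeneous _ _⟩, ?_⟩
    rw [hs]
    have : ∀ k, (d = k + m) ↔ (d - m = k) := fun k => by omega
    simp only [this, Finset.sum_ite_eq, Finset.mem_range]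
    split_ifs with h
    · rfl
    · rw [homogeneousComponent_eq_zero _ _ (by omega), zero_mul]
  · refine ⟨0, Or.inl rfl, ?_⟩
    rw [hs, zero_mul]
    exact Finset.sum_eq_zero fun k _ => if_neg (by omega)

theorem claimA (A : Type*) [CommRing A] (n d : ℕ) (p : MvPolynomial (Fin n) A)
    (hp : p.IsHomogeneous d) : ∃ (α : ((i : Fin n) → Fin (i.1 + 1)) → A)
      (q : Fin n → MvPolynomial (Fin n) A),
      (∀ j, α j = 0 ∨ (stairMon A n j).IsHomogeneous d) ∧
      (∀ i, q i = 0 ∨ ∃ k, k + (i.1 + 1) = d ∧ (q i).IsHomogeneous k) ∧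
      p = ∑ j, α j • stairMon A n j + ∑ i, q i * esymm (Fin n) A (i.1 + 1) := by
  let I : Ideal (MvPolynomial (Fin n) A) :=
    Ideal.span (Set.range fun i : Fin n => esymm (Fin n) A (i.1 + 1))
  have hspan : Submodule.span A (Set.range fun j : (i : Fin n) → Fin (i.1 + 1) =>
      ∏ i, (Ideal.Quotient.mk I (X i)) ^ (j i : ℕ)) = ⊤ := by
    by_cases hA : Nontrivial A
    · refine spanS n A (MvPolynomial (Fin n) A ⧸ I) (Polynomial.X ^ n) (Polynomial.monic_X_pow n)
        (Polynomial.natDegree_X_pow n) (fun i => Ideal.Quotient.mk I (X i)) ?_ ?_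
      · rw [vieta_aux, Finset.sum_eq_zero]
        · simp
        · intro j hj
          have : ∑ s ∈ Finset.powersetCard (j + 1) (Finset.univ : Finset (Fin n)),
              ∏ i ∈ s, Ideal.Quotient.mk I (X i) = Ideal.Quotient.mk I (esymm (Fin n) A (j + 1)) := by
            simp [esymm]
          rw [this, Ideal.Quotient.eq_zero_iff_mem.2]
          · simp
          · exact Ideal.subset_span ⟨⟨j, Finset.mem_range.1 hj⟩, rfl⟩
      · have h1 := congrArg (Subalgebra.map (Ideal.Quotient.mkₐ A I))
          (MvPolynomial.adjoin_range_X (R := A) (σ := Fin n))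
        rw [AlgHom.map_adjoin, Algebra.map_top, ← Set.range_comp] at h1
        rw [(AlgHom.range_eq_top _).2 (Ideal.Quotient.mkₐ_surjective A I)] at h1
        exact h1
    · rw [not_nontrivial_iff_subsingleton] at hA
      have := Module.subsingleton A (MvPolynomial (Fin n) A ⧸ I)
      exact Subsingleton.elim _ _
  have hm : Ideal.Quotient.mk I p ∈ Submodule.span A
      (Set.range fun j : (i : Fin n) → Fin (i.1 + 1) =>
      ∏ i, (Ideal.Quotient.mk I (X i)) ^ (j i : ℕ)) := by rw [hspan]; trivial
  obtain ⟨β, hβ⟩ := (Submodule.mem_span_range_iff_exists_fun A).1 hm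
  have hI : p - ∑ j, β j • stairMon A n j ∈ I := by
    rw [← Ideal.Quotient.eq_zero_iff_mem, map_sub, ← hβ, map_sum, sub_eq_zero]
    refine Finset.sum_congr rfl fun j _ => ?_
    have : Ideal.Quotient.mk I (β j • stairMon A n j) =
      β j • Ideal.Quotient.mk I (stairMon A n j) := rfl
    rw [this]
    simp [stairMon]
  obtain ⟨r, hr⟩ := Ideal.mem_span_range_iff_exists_fun.1 hI
  choose q hq1 hq2 using fun i : Fin n => hc_mul (r i) (esymm (Fin n) A (i.1 + 1)) (i.1 + 1) d
    (esymm_hom A n (i.1 + 1))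
  classical
  refine ⟨fun j => if d = ∑ i, (j i : ℕ) then β j else 0, q, ?_, hq1, ?_⟩
  · intro j
    by_cases h : d = ∑ i, (j i : ℕ)
    · right; rw [h]; exact stairMon_hom A n j
    · left; exact if_neg h
  · have h1 : p = ∑ j, β j • stairMon A n j + ∑ i, r i * esymm (Fin n) A (i.1 + 1) := by
      rw [hr]; ring
    have h2 := congrArg (homogeneousComponent d) h1
    rw [homogeneousComponent_eq_self hp, map_add, map_sum, map_sum] at h2
    rw [h2]
    congr 1
    · refine Finset.sum_congr rfl fun j _ => ?_
      rw [map_smul, homogeneousComponent_of_mem (stairMon_hom A n j)]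
      by_cases h : d = ∑ i, (j i : ℕ)
      · simp only [if_pos h]
      · simp only [if_neg h, smul_zero, zero_smul]
    · exact Finset.sum_congr rfl fun i _ => hq2 i

theorem unit_diff {A : Type*} [CommRing A] {n : ℕ} (hn : IsUnit (n.factorial : A)) (a b : Fin n)
    (hab : a ≠ b) : IsUnit (((a : ℕ) : A) - ((b : ℕ) : A)) := by
  have key : ∀ a b : Fin n, a < b → IsUnit (((b : ℕ) : A) - ((a : ℕ) : A)) := by
    intro a b h
    have h' : a.1 < b.1 := h
    rw [← Nat.cast_sub h'.le]
    exact isUnit_of_dvd_unit (Nat.cast_dvd_cast (Nat.dvd_factorial (by omega) (by omega))) hn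
  rcases lt_or_gt_of_ne hab with h | h
  · rw [← neg_sub]; exact (key a b h).neg
  · exact key b a h

/-- evaluation at permutations -/
noncomputable def evP (A : Type*) [CommRing A] (n : ℕ) :
    MvPolynomial (Fin n) A →ₗ[A] (Equiv.Perm (Fin n) → A) :=
  LinearMap.pi fun σ => (aeval (fun i => (((σ i : Fin n) : ℕ) : A))).toLinearMap

theorem evP_apply (A : Type*) [CommRing A] (n : ℕ) (p : MvPolynomial (Fin n) A)
    (σ : Equiv.Perm (Fin n)) :
    evP A n p σ = aeval (fun i => (((σ i : Fin n) : ℕ) : A)) p := rfl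

theorem evP_rename (A : Type*) [CommRing A] (n : ℕ) (p : MvPolynomial (Fin n) A)
    (σ τ : Equiv.Perm (Fin n)) :
    evP A n (rename τ p) σ = evP A n p (σ * τ) := by
  rw [evP_apply, evP_apply, aeval_rename]; rfl

theorem evP_esymm (A : Type*) [CommRing A] (n : ℕ) (p : MvPolynomial (Fin n) A) (k : ℕ) :
    evP A n (p * esymm (Fin n) A k) =
      (aeval (fun i : Fin n => ((i : ℕ) : A)) (esymm (Fin n) A k) : A) • evP A n p := by
  ext σ
  rw [Pi.smul_apply, evP_apply, evP_apply, map_mul, mul_comm, smul_eq_mul]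
  congr 1
  conv_rhs => rw [← rename_esymm (Fin n) A k σ, aeval_rename]
  rfl

theorem evP_surj {A : Type*} [CommRing A] {n : ℕ} (hn : IsUnit (n.factorial : A)) :
    Function.Surjective (evP A n) := by
  classical
  rw [← LinearMap.range_eq_top, eq_top_iff, ← (Pi.basisFun A (Equiv.Perm (Fin n))).span_eq,
    Submodule.span_le]
  rintro _ ⟨σ, rfl⟩
  have hu : ∀ a b : Fin n, ∃ u : A, a ≠ b → u * (((a : ℕ) : A) - ((b : ℕ) : A)) = 1 := by
    intro a b
    by_cases h : a = b
    · exact ⟨0, fun h' => absurd h h'⟩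
    · obtain ⟨u, hu⟩ := (unit_diff hn a b h).exists_left_inv
      exact ⟨u, fun _ => hu⟩
  choose u hu using hu
  refine ⟨∏ i, ∏ k ∈ Finset.univ.erase (σ i), (C (u (σ i) k) * (X i - C ((k : ℕ) : A))), ?_⟩
  ext τ
  rw [evP_apply]
  simp only [map_prod, map_mul, map_sub, aeval_X, aeval_C, Algebra.algebraMap_self, RingHom.id_apply,
    Pi.basisFun_apply]
  by_cases h : τ = σ
  · subst h
    rw [Pi.single_eq_same]
    refine Finset.prod_eq_one fun i _ => Finset.prod_eq_one fun k hk => ?_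
    exact hu _ _ (Finset.ne_of_mem_erase hk).symm
  · rw [Pi.single_eq_of_ne h]
    obtain ⟨i, hi⟩ : ∃ i, τ i ≠ σ i := by
      by_contra hc
      push Not at hc
      exact h (Equiv.ext hc)
    refine Finset.prod_eq_zero (Finset.mem_univ i) (Finset.prod_eq_zero (i := τ i) (by simpa using hi) ?_)
    simp

/-- span of homogeneous polynomials of degree `< d` -/
noncomputable def lowDeg (A : Type*) [CommRing A] (n d : ℕ) : Submodule A (MvPolynomial (Fin n) A) :=
  Submodule.span A {p | ∃ k, k < d ∧ p.IsHomogeneous k}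

theorem lowDeg_mem {A : Type*} [CommRing A] {n d k : ℕ} {p : MvPolynomial (Fin n) A}
    (h : p.IsHomogeneous k) (hk : k < d) : p ∈ lowDeg A n d := Submodule.subset_span ⟨k, hk, h⟩

theorem lowDeg_mono {A : Type*} [CommRing A] {n d e : ℕ} (h : d ≤ e) :
    lowDeg A n d ≤ lowDeg A n e :=
  Submodule.span_mono fun _ ⟨k, hk, hp⟩ => ⟨k, by omega, hp⟩

theorem lowDeg_rename {A : Type*} [CommRing A] {n d : ℕ} {p : MvPolynomial (Fin n) A}
    (h : p ∈ lowDeg A n d) (σ : Equiv.Perm (Fin n)) : rename σ p ∈ lowDeg A n d := by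
  have : lowDeg A n d ≤ (lowDeg A n d).comap (rename σ).toLinearMap := by
    refine Submodule.span_le.2 ?_
    rintro p ⟨k, hk, hp⟩
    exact lowDeg_mem (p := rename σ p) hp.rename_isHomogeneous hk
  exact this h

theorem exists_lowDeg {A : Type*} [CommRing A] {n : ℕ} (p : MvPolynomial (Fin n) A) :
    p ∈ lowDeg A n (p.totalDegree + 1) := by
  have : ∑ i ∈ Finset.range (p.totalDegree + 1), homogeneousComponent i p ∈
      lowDeg A n (p.totalDegree + 1) :=
    Submodule.sum_mem _ fun i hi => lowDeg_mem (homogeneousComponent_isHomogeneous i p)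
      (Finset.mem_range.1 hi)
  rwa [sum_homogeneousComponent] at this

/-- A filtered section of the evaluation map. -/
theorem exists_section {A : Type*} [CommRing A] {n : ℕ} (hn : IsUnit (n.factorial : A)) :
    ∃ ψ : (Equiv.Perm (Fin n) → A) →ₗ[A] MvPolynomial (Fin n) A,
      ∀ j, ψ (evP A n (stairMon A n j)) = stairMon A n j := by
  classical
  have hhom : ∀ d, ∀ p : MvPolynomial (Fin n) A, p.IsHomogeneous d →
      evP A n p ∈ Submodule.span A (Set.range fun j => evP A n (stairMon A n j)) := by
    intro d
    induction d using Nat.strong_induction_on with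
    | _ d ih =>
      intro p hp
      obtain ⟨α, q, -, hq, rfl⟩ := claimA A n d p hp
      rw [map_add, map_sum, map_sum]
      refine add_mem (Submodule.sum_mem _ fun j _ => ?_) (Submodule.sum_mem _ fun i _ => ?_)
      · rw [map_smul]
        exact Submodule.smul_mem _ _ (Submodule.subset_span ⟨j, rfl⟩)
      · rw [evP_esymm]
        refine Submodule.smul_mem _ _ ?_
        rcases hq i with h | ⟨k, hk, h⟩
        · rw [h, map_zero]; exact zero_mem _
        · exact ih k (by omega) _ h
  have hspan : Submodule.span A (Set.range fun j => evP A n (stairMon A n j)) = ⊤ := by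
    rw [eq_top_iff]
    intro g _
    obtain ⟨p, rfl⟩ := evP_surj hn g
    have : lowDeg A n (p.totalDegree + 1) ≤
        (Submodule.span A (Set.range fun j => evP A n (stairMon A n j))).comap (evP A n) := by
      refine Submodule.span_le.2 ?_
      rintro p ⟨k, hk, hp⟩
      exact hhom k p hp
    exact this (exists_lowDeg p)
  have hcard : Fintype.card ((i : Fin n) → Fin (i.1 + 1)) = n.factorial := by
    rw [Fintype.card_pi]
    simp only [Fintype.card_fin]
    rw [Fin.prod_univ_eq_prod_range (fun i => i + 1) n, Finset.prod_range_add_one_eq_factorial]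
  have hcard2 : Fintype.card ((i : Fin n) → Fin (i.1 + 1)) = Fintype.card (Equiv.Perm (Fin n)) := by
    rw [hcard, Fintype.card_perm, Fintype.card_fin]
  let L : (((i : Fin n) → Fin (i.1 + 1)) → A) →ₗ[A] (Equiv.Perm (Fin n) → A) :=
    Fintype.linearCombination A (fun j => evP A n (stairMon A n j))
  have hL : Function.Surjective L := by
    rw [← LinearMap.range_eq_top, Fintype.range_linearCombination, hspan]
  let e := LinearEquiv.funCongrLeft A A (Fintype.equivOfCardEq hcard2)
  have hLi : Function.Injective L := by
    have := OrzechProperty.injective_of_surjective_endomorphism (e.toLinearMap ∘ₗ L)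
      (e.surjective.comp hL)
    exact Function.Injective.of_comp (f := e) (g := L) this
  let Le := LinearEquiv.ofBijective L ⟨hLi, hL⟩
  refine ⟨Fintype.linearCombination A (stairMon A n) ∘ₗ Le.symm.toLinearMap, fun j => ?_⟩
  have h1 : Le (Pi.single j 1) = evP A n (stairMon A n j) := by
    change L (Pi.single j 1) = _
    simp [L, Fintype.linearCombination_apply_single]
  rw [← h1]
  simp [Fintype.linearCombination_apply_single]

theorem exists_gen {A : Type*} [CommRing A] {n : ℕ} (hn : IsUnit (n.factorial : A))
    (K : Submodule A (MvPolynomial (Fin n) A)) (c : Fin n → A)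
    (hK : ∀ i q, q * esymm (Fin n) A (i.1 + 1) - c i • q ∈ K)
    (hKr : ∀ (σ : Equiv.Perm (Fin n)) p, p ∈ K → rename σ p ∈ K) :
    ∃ g : MvPolynomial (Fin n) A,
      Submodule.span A (Set.range fun σ : Equiv.Perm (Fin n) => rename σ g) ⊔ K = ⊤ := by
  classical
  obtain ⟨ψ, hψ⟩ := exists_section hn
  have P1 : ∀ d, ∀ p : MvPolynomial (Fin n) A, p.IsHomogeneous d →
      ψ (evP A n p) ∈ lowDeg A n (d + 1) := by
    intro d
    induction d using Nat.strong_induction_on with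
    | _ d ih =>
      intro p hp
      obtain ⟨α, q, hα, hq, rfl⟩ := claimA A n d p hp
      simp only [map_add, map_sum, map_smul, hψ, evP_esymm]
      refine add_mem (Submodule.sum_mem _ fun j _ => ?_) (Submodule.sum_mem _ fun i _ => ?_)
      · rcases hα j with h | h
        · rw [h, zero_smul]; exact zero_mem _
        · exact Submodule.smul_mem _ _ (lowDeg_mem h (by omega))
      · refine Submodule.smul_mem _ _ ?_
        rcases hq i with h | ⟨k, hk, h⟩
        · rw [h, map_zero, map_zero]; exact zero_mem _
        · exact lowDeg_mono (by omega) (ih k (by omega) _ h)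
  have P2 : ∀ d, ∀ p : MvPolynomial (Fin n) A, p.IsHomogeneous d →
      ψ (evP A n p) - p ∈ K ⊔ lowDeg A n d := by
    intro d p hp
    obtain ⟨α, q, hα, hq, rfl⟩ := claimA A n d p hp
    simp only [map_add, map_sum, map_smul, hψ, evP_esymm]
    rw [add_sub_add_left_eq_sub, ← Finset.sum_sub_distrib]
    refine Submodule.sum_mem _ fun i _ => ?_
    have h1 : (aeval (fun i : Fin n => ((i : ℕ) : A)) (esymm (Fin n) A (i.1 + 1)) : A) •
        ψ (evP A n (q i)) - c i • q i ∈ lowDeg A n d := by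
      rcases hq i with h | ⟨k, hk, h⟩
      · rw [h]; simp
      · refine sub_mem (Submodule.smul_mem _ _ ?_) (Submodule.smul_mem _ _ ?_)
        · exact lowDeg_mono (by omega) (P1 k _ h)
        · exact lowDeg_mem h (by omega)
    have h2 := sub_mem (Submodule.mem_sup_right (S := K) h1)
      (Submodule.mem_sup_left (T := lowDeg A n d) (hK i (q i)))
    convert h2 using 1
    abel
  obtain ⟨v, hv⟩ := hn.exists_left_inv
  -- the action of permutations on functions
  let act : Equiv.Perm (Fin n) → (Equiv.Perm (Fin n) → A) →ₗ[A] (Equiv.Perm (Fin n) → A) :=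
    fun τ => LinearMap.funLeft A A (fun σ => σ * τ)
  have act_mul : ∀ τ₁ τ₂ g, act τ₁ (act τ₂ g) = act (τ₁ * τ₂) g := by
    intro τ₁ τ₂ g; ext σ; simp [act, LinearMap.funLeft_apply, mul_assoc]
  have act_ev : ∀ τ p, act τ (evP A n p) = evP A n (rename τ p) := by
    intro τ p; ext σ; rw [evP_rename]; rfl
  let Ψ : (Equiv.Perm (Fin n) → A) →ₗ[A] MvPolynomial (Fin n) A :=
    v • ∑ τ : Equiv.Perm (Fin n), (rename τ).toLinearMap ∘ₗ ψ ∘ₗ act τ⁻¹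
  have hΨ : ∀ g, Ψ g = v • ∑ τ : Equiv.Perm (Fin n), rename τ (ψ (act τ⁻¹ g)) := by
    intro g; simp [Ψ, LinearMap.sum_apply]
  have Ψ_eq : ∀ τ g, Ψ (act τ g) = rename τ (Ψ g) := by
    intro τ g
    rw [hΨ, hΨ, map_smul, map_sum]
    congr 1
    rw [← Equiv.sum_comp (Equiv.mulLeft τ)]
    refine Finset.sum_congr rfl fun κ _ => ?_
    rw [act_mul, rename_rename]
    simp only [Equiv.coe_mulLeft, mul_inv_rev, inv_mul_cancel_right]
    rfl
  have P3 : ∀ d, ∀ p : MvPolynomial (Fin n) A, p.IsHomogeneous d →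
      Ψ (evP A n p) - p ∈ K ⊔ lowDeg A n d := by
    intro d p hp
    have h1 : p = v • ∑ τ : Equiv.Perm (Fin n), p := by
      rw [Finset.sum_const, Finset.card_univ, Fintype.card_perm, Fintype.card_fin,
        ← Nat.cast_smul_eq_nsmul A, smul_smul, hv, one_smul]
    have h2 : Ψ (evP A n p) - p = v • ∑ τ : Equiv.Perm (Fin n),
        rename τ (ψ (evP A n (rename (τ⁻¹ : Equiv.Perm (Fin n)) p)) -
          rename (τ⁻¹ : Equiv.Perm (Fin n)) p) := by
      conv_lhs => rw [h1, ← h1, hΨ]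
      conv_lhs => enter [2]; rw [h1]
      rw [← smul_sub, ← Finset.sum_sub_distrib]
      congr 1
      refine Finset.sum_congr rfl fun τ _ => ?_
      rw [map_sub, act_ev, rename_rename]
      congr 1
      rw [← Equiv.Perm.coe_mul, mul_inv_cancel, Equiv.Perm.coe_one, rename_id]
      rfl
    rw [h2]
    refine Submodule.smul_mem _ _ (Submodule.sum_mem _ fun τ _ => ?_)
    have h3 := P2 d (rename (τ⁻¹ : Equiv.Perm (Fin n)) p) hp.rename_isHomogeneous
    obtain ⟨a, ha, b, hb, hab⟩ := Submodule.mem_sup.1 h3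
    rw [← hab, map_add]
    exact add_mem (Submodule.mem_sup_left (hKr τ a ha)) (Submodule.mem_sup_right (lowDeg_rename hb τ))
  have P4 : ∀ d, lowDeg A n d ≤ LinearMap.range Ψ ⊔ K := by
    intro d
    induction d with
    | zero =>
      refine Submodule.span_le.2 ?_
      rintro p ⟨k, hk, -⟩
      omega
    | succ d ih =>
      refine Submodule.span_le.2 ?_
      rintro p ⟨k, hk, hp⟩
      have h1 := P3 k p hp
      have h2 : K ⊔ lowDeg A n k ≤ LinearMap.range Ψ ⊔ K :=
        sup_le le_sup_right ((lowDeg_mono (by omega)).trans ih)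
      have h3 := sub_mem (Submodule.mem_sup_left (T := K) ⟨evP A n p, rfl⟩ :
        Ψ (evP A n p) ∈ LinearMap.range Ψ ⊔ K) (h2 h1)
      rwa [sub_sub_cancel] at h3
  refine ⟨Ψ (Pi.single 1 1), ?_⟩
  have h5 : LinearMap.range Ψ ≤ Submodule.span A
      (Set.range fun σ : Equiv.Perm (Fin n) => rename σ (Ψ (Pi.single 1 1))) := by
    rw [LinearMap.range_eq_map, ← (Pi.basisFun A (Equiv.Perm (Fin n))).span_eq, Submodule.map_span,
      Submodule.span_le]
    rintro _ ⟨_, ⟨σ, rfl⟩, rfl⟩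
    refine Submodule.subset_span ⟨σ⁻¹, ?_⟩
    simp only
    rw [← Ψ_eq]
    congr 1
    ext κ
    simp only [act, LinearMap.funLeft_apply, Pi.basisFun_apply, Pi.single_apply, mul_inv_eq_one]
  rw [eq_top_iff]
  intro p _
  exact sup_le_sup_right h5 K (P4 _ (exists_lowDeg p))

end PartTwo

section PartThree

theorem neg_pow_aux {R : Type*} [CommRing R] (k : ℕ) (x e : R) (h : x = (-1) ^ k * e) :
    e = (-1) ^ k * x := by
  rw [h, ← mul_assoc, ← mul_pow]; simp

theorem mkSq (A : Type*) [CommRing A] (n : ℕ) (a : ℕ → A) (i : ℕ) (hi : i < n) :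
    ∑ s ∈ Finset.powersetCard (i + 1) (Finset.univ : Finset (Fin n)),
      ∏ j ∈ s, ssplitEta A n a j ^ 2 =
    algebraMap A (SSplit A n a) ((-1) ^ (i + 1) * a (2 * (i + 1))) := by
  have h : Ideal.Quotient.mk (ssplitIdeal A n a)
      (C (a (2 * (i + 1))) - (-1 : MvPolynomial (Fin n) A) ^ (i + 1) * esymmSq A n (i + 1)) = 0 :=
    Ideal.Quotient.eq_zero_iff_mem.2 (Ideal.subset_span ⟨⟨i, hi⟩, rfl⟩)
  have h2 : Ideal.Quotient.mk (ssplitIdeal A n a) (C (a (2 * (i + 1)))) =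
    algebraMap A (SSplit A n a) (a (2 * (i + 1))) := rfl
  rw [map_sub, h2, sub_eq_zero, map_mul, map_pow, map_neg, map_one] at h
  rw [map_mul, map_pow, map_neg, map_one]
  refine Eq.trans ?_ (neg_pow_aux _ _ _ h)
  simp [esymmSq, ssplitEta]

theorem coeff_aux {R : Type*} [CommRing R] (n : ℕ) (b : ℕ → R) (i : ℕ) (hi : i < n) :
    (Polynomial.X ^ n + ∑ j ∈ Finset.range n, Polynomial.C (b j) *
      Polynomial.X ^ (n - (j + 1)) : Polynomial R).coeff (n - (i + 1)) = b i := by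
  rw [Polynomial.coeff_add, Polynomial.finsetSum_coeff, Polynomial.coeff_X_pow, if_neg (by omega),
    zero_add, Finset.sum_eq_single_of_mem i (Finset.mem_range.2 hi)]
  · simp
  · intro j hj hji
    rw [Finset.mem_range] at hj
    rw [Polynomial.coeff_C_mul, Polynomial.coeff_X_pow, if_neg (by omega), mul_zero]

/-- The signed splitting ring surjects onto a free module of rank `2 ^ n * n!`. -/
theorem exists_surj (A : Type u) [CommRing A] [Nontrivial A] (n : ℕ) (a : ℕ → A) :
    ∃ (E : Type u) (_ : AddCommGroup E) (_ : Module A E) (ι : Type) (_ : Fintype ι)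
      (_ : Module.Basis ι A E) (π : SSplit A n a →ₗ[A] E),
      Fintype.card ι = 2 ^ n * n.factorial ∧ Function.Surjective π := by
  let r : Polynomial A := ∑ j ∈ Finset.range n, Polynomial.C (a (2 * (j + 1))) *
      Polynomial.X ^ (n - (j + 1))
  have hr : r.degree < n := by
    refine (Polynomial.degree_sum_le _ _).trans_lt ?_
    refine (Finset.sup_lt_iff (WithBot.bot_lt_coe n)).2 ?_
    intro j hj
    rw [Finset.mem_range] at hj
    refine (Polynomial.degree_C_mul_X_pow_le _ _).trans_lt ?_
    have hlt : n - (j + 1) < n := by omega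
    exact WithBot.coe_lt_coe.2 hlt
  have hm : (Polynomial.X ^ n + r).Monic := Polynomial.monic_X_pow_add hr
  have hd : (Polynomial.X ^ n + r).natDegree = n := by
    apply Polynomial.natDegree_eq_of_degree_eq_some
    rw [Polynomial.degree_add_eq_left_of_degree_lt] <;> simp [hr]
  obtain ⟨E, _, _, y, ι, _, b, hc, hp, hgen⟩ := exE n A _ hm hd
  have hker : ∀ p ∈ ssplitIdeal A n a, (aeval y : MvPolynomial (Fin n) A →ₐ[A] E) p = 0 := by
    intro p hpI
    have : ssplitIdeal A n a ≤ RingHom.ker (aeval y : MvPolynomial (Fin n) A →ₐ[A] E) := by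
      refine Ideal.span_le.2 ?_
      rintro _ ⟨i, rfl⟩
      have h1 := congrArg (fun P => Polynomial.coeff P (n - (i.1 + 1))) hp
      simp only [vieta_aux, r, Polynomial.map_add, Polynomial.map_pow, Polynomial.map_X,
        Polynomial.map_sum, Polynomial.map_mul, Polynomial.map_C] at h1
      rw [coeff_aux n (fun j => algebraMap A E (a (2 * (j + 1)))) i.1 i.2,
        coeff_aux n (fun j => (-1) ^ (j + 1) * ∑ s ∈ Finset.powersetCard (j + 1)
          (Finset.univ : Finset (Fin n)), ∏ i ∈ s, y i ^ 2) i.1 i.2] at h1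
      simp only [SetLike.mem_coe, RingHom.mem_ker, map_sub, aeval_C, h1]
      simp [esymmSq]
    exact this hpI
  let π : SSplit A n a →ₐ[A] E := Ideal.Quotient.liftₐ _ (aeval y) hker
  refine ⟨E, inferInstance, inferInstance, ι, inferInstance, b, π.toLinearMap, hc, ?_⟩
  intro z
  have hz : z ∈ (aeval y : MvPolynomial (Fin n) A →ₐ[A] E).range := by
    rw [← Algebra.adjoin_range_eq_range_aeval, hgen]; trivial
  obtain ⟨p, rfl⟩ := hz
  exact ⟨Ideal.Quotient.mk _ p, rfl⟩

theorem hyper_sign_sum {B : Type*} [CommRing B] (n : ℕ) (η : Fin n → B) (S : Finset (Fin n)) :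
    ∑ v : Fin n → ℤˣ, ((∏ i ∈ S, (v i : ℤ) : ℤ) : B) * ∏ i, (1 + ((v i : ℤ) : B) * η i) =
      2 ^ n * ∏ i ∈ S, η i := by
  classical
  have h := Finset.prod_univ_sum (fun _ : Fin n => (Finset.univ : Finset ℤˣ))
    (fun i ε => (if i ∈ S then ((ε : ℤ) : B) else 1) * (1 + ((ε : ℤ) : B) * η i))
  rw [Fintype.piFinset_univ] at h
  have e1 : ∀ v : Fin n → ℤˣ, ((∏ i ∈ S, (v i : ℤ) : ℤ) : B) * ∏ i, (1 + ((v i : ℤ) : B) * η i) =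
      ∏ i, ((if i ∈ S then ((v i : ℤ) : B) else 1) * (1 + ((v i : ℤ) : B) * η i)) := by
    intro v
    rw [Finset.prod_mul_distrib, Finset.prod_ite_mem]
    simp
  simp only [e1]
  rw [← h]
  have e2 : ∀ i : Fin n, ∑ ε : ℤˣ, (if i ∈ S then ((ε : ℤ) : B) else 1) *
      (1 + ((ε : ℤ) : B) * η i) = 2 * (if i ∈ S then η i else 1) := by
    intro i
    have : (Finset.univ : Finset ℤˣ) = {1, -1} := rfl
    rw [this, Finset.sum_pair (by decide)]
    split_ifs <;> push_cast <;> ring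
  simp only [e2]
  rw [Finset.prod_mul_distrib, Finset.prod_ite_mem]
  simp

theorem exists_gen_B (A : Type*) [CommRing A]
    (n : ℕ) (a : ℕ → A)
    (h2 : IsUnit (2 : A)) (hn : IsUnit (n.factorial : A))
    (ρ : Hyperoct n →* (SSplit A n a ≃ₐ[A] SSplit A n a))
    (hρ : ∀ (v : Fin n → ℤˣ) (σ : Equiv.Perm (Fin n)) (i : Fin n),
      ρ ⟨v, σ⟩ (ssplitEta A n a i) = (v (σ i) : ℤ) • ssplitEta A n a (σ i)) :
    ∃ b : SSplit A n a, Submodule.span A (Set.range fun w => ρ w b) = ⊤ := by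
  classical
  let η := ssplitEta A n a
  let θ : MvPolynomial (Fin n) A →ₐ[A] SSplit A n a := aeval (fun i => η i ^ 2)
  have θX : ∀ i, θ (X i) = η i ^ 2 := fun i => by simp [θ]
  have θr : ∀ v σ p, ρ ⟨v, σ⟩ (θ p) = θ (rename σ p) := by
    intro v σ p
    have : ((ρ ⟨v, σ⟩ : SSplit A n a ≃ₐ[A] SSplit A n a) : SSplit A n a →ₐ[A] SSplit A n a).comp θ =
        θ.comp (rename σ) := by
      apply MvPolynomial.algHom_ext
      intro i
      simp only [AlgHom.comp_apply, rename_X, θX, map_pow]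
      have := hρ v σ i
      change (ρ ⟨v, σ⟩ (ssplitEta A n a i)) ^ 2 = _
      rw [this, smul_pow]
      rcases Int.units_eq_one_or (v (σ i)) with h | h <;> simp [h, η]
    exact DFunLike.congr_fun this p
  obtain ⟨g, hg⟩ := exists_gen hn (LinearMap.ker θ.toLinearMap)
    (fun i => (-1) ^ (i.1 + 1) * a (2 * (i.1 + 1)))
    (by
      intro i q
      have : θ (esymm (Fin n) A (i.1 + 1)) =
          algebraMap A _ ((-1) ^ (i.1 + 1) * a (2 * (i.1 + 1))) := by
        rw [← mkSq A n a i.1 i.2]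
        simp [esymm, θ, η]
      rw [LinearMap.mem_ker, AlgHom.toLinearMap_apply, map_sub, map_mul, map_smul, this]
      exact sub_eq_zero.2 ((mul_comm _ _).trans (Algebra.smul_def _ _).symm))
    (by
      intro σ p hp
      rw [LinearMap.mem_ker, AlgHom.toLinearMap_apply] at hp ⊢
      rw [← θr 1 σ, hp, map_zero])
  refine ⟨θ g * ∏ i, (1 + η i), ?_⟩
  set N := Submodule.span A (Set.range fun w => ρ w (θ g * ∏ i, (1 + η i))) with hN
  have hρb : ∀ v σ, ρ ⟨v, σ⟩ (θ g * ∏ i, (1 + η i)) =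
      θ (rename σ g) * ∏ i, (1 + ((v i : ℤ) : SSplit A n a) * η i) := by
    intro v σ
    rw [map_mul, θr, map_prod]
    congr 1
    rw [← Equiv.prod_comp σ (fun i => 1 + ((v i : ℤ) : SSplit A n a) * η i)]
    refine Finset.prod_congr rfl fun i _ => ?_
    rw [map_add, map_one]
    have := hρ v σ i
    change _ + ρ ⟨v, σ⟩ (ssplitEta A n a i) = _
    rw [this, zsmul_eq_mul]
  have s1 : ∀ (σ : Equiv.Perm (Fin n)) (S : Finset (Fin n)),
      θ (rename σ g) * ∏ i ∈ S, η i ∈ N := by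
    intro σ S
    obtain ⟨u, hu⟩ := (h2.pow n).exists_left_inv
    have h1 : θ (rename σ g) * ∏ i ∈ S, η i = u • ∑ v : Fin n → ℤˣ,
        (∏ i ∈ S, (v i : ℤ)) • ρ ⟨v, σ⟩ (θ g * ∏ i, (1 + η i)) := by
      have h3 : ∑ v : Fin n → ℤˣ, (∏ i ∈ S, (v i : ℤ)) • ρ ⟨v, σ⟩ (θ g * ∏ i, (1 + η i)) =
          (2 ^ n : A) • (θ (rename σ g) * ∏ i ∈ S, η i) := by
        have h4 : (2 ^ n : A) • (θ (rename σ g) * ∏ i ∈ S, η i) =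
            θ (rename σ g) * (2 ^ n * ∏ i ∈ S, η i) := by
          refine (Algebra.smul_def (2 ^ n : A) (θ (rename σ g) * ∏ i ∈ S, η i)).trans ?_
          rw [map_pow, map_ofNat]; ring
        rw [h4, ← hyper_sign_sum, Finset.mul_sum]
        refine Finset.sum_congr rfl fun v _ => ?_
        rw [hρb, zsmul_eq_mul]; ring
      rw [h3, smul_smul, hu, one_smul]
    rw [h1]
    refine Submodule.smul_mem _ _ (Submodule.sum_mem _ fun v _ => ?_)
    have hm : ρ ⟨v, σ⟩ (θ g * ∏ i, (1 + η i)) ∈ N := Submodule.subset_span ⟨⟨v, σ⟩, rfl⟩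
    exact zsmul_mem hm _
  have s2 : ∀ (p : MvPolynomial (Fin n) A) (S : Finset (Fin n)), θ p * ∏ i ∈ S, η i ∈ N := by
    intro p S
    have hp : p ∈ Submodule.span A (Set.range fun σ : Equiv.Perm (Fin n) => rename σ g) ⊔
      LinearMap.ker θ.toLinearMap := by rw [hg]; trivial
    have : Submodule.span A (Set.range fun σ : Equiv.Perm (Fin n) => rename σ g) ⊔
        LinearMap.ker θ.toLinearMap ≤
        N.comap ((LinearMap.mulRight A (∏ i ∈ S, η i)) ∘ₗ θ.toLinearMap) := by
      refine sup_le (Submodule.span_le.2 ?_) ?_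
      · rintro _ ⟨σ, rfl⟩
        exact s1 σ S
      · intro q hq
        rw [LinearMap.mem_ker] at hq
        rw [Submodule.mem_comap, LinearMap.comp_apply, hq, map_zero]
        exact zero_mem _
    exact this hp
  let N' := Submodule.span A (Set.range fun pS : MvPolynomial (Fin n) A × Finset (Fin n) =>
    θ pS.1 * ∏ i ∈ pS.2, η i)
  have hN' : N' ≤ N := Submodule.span_le.2 (by rintro _ ⟨⟨p, S⟩, rfl⟩; exact s2 p S)
  have hmul : ∀ i, N' ≤ N'.comap (LinearMap.mulRight A (η i)) := by
    intro i
    refine Submodule.span_le.2 ?_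
    rintro _ ⟨⟨p, S⟩, rfl⟩
    refine Submodule.subset_span ?_
    by_cases hi : i ∈ S
    · refine ⟨⟨p * X i, S.erase i⟩, ?_⟩
      simp only [map_mul, θX, LinearMap.mulRight_apply]
      rw [← Finset.mul_prod_erase S η hi]
      ring
    · refine ⟨⟨p, insert i S⟩, ?_⟩
      simp only [LinearMap.mulRight_apply]
      rw [Finset.prod_insert hi]
      ring
  rw [eq_top_iff]
  rintro z -
  obtain ⟨p, rfl⟩ := Ideal.Quotient.mk_surjective z
  apply hN'
  induction p using MvPolynomial.induction_on with
  | C r =>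
    refine Submodule.subset_span ⟨⟨C r, ∅⟩, ?_⟩
    simp [θ]
    rfl
  | add p q hp hq => rw [map_add]; exact add_mem hp hq
  | mul_X p i hp => rw [map_mul]; exact hmul i hp

end PartThree

/-- Suppose `2` and `n!` are invertible in `A`.  For the natural action `ρ` of the hyperoctahedral
group `W_n = S_n ⋉ (ℤ/2)^n` on the signed splitting ring `B = SSplit_A(f)` by `A`-algebra
automorphisms (with `S_n` permuting the `η_i` and the `i`-th `ℤ/2` flipping the sign of `η_i`),
`B` is free of rank one as a module over the group algebra `A[W_n]`; equivalently, there is an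
`A`-linear isomorphism `A[W_n] ≃ B` intertwining the actions. -/
theorem ssplit_free_rank_one_over_group_algebra (A : Type*) [CommRing A]
    (n : ℕ) (a : ℕ → A) (ha : a 0 = 1)
    (h2 : IsUnit (2 : A)) (hn : IsUnit (n.factorial : A))
    (ρ : Hyperoct n →* (SSplit A n a ≃ₐ[A] SSplit A n a))
    (hρ : ∀ (v : Fin n → ℤˣ) (σ : Equiv.Perm (Fin n)) (i : Fin n),
      ρ ⟨v, σ⟩ (ssplitEta A n a i) = (v (σ i) : ℤ) • ssplitEta A n a (σ i)) :
    ∃ e : MonoidAlgebra A (Hyperoct n) ≃ₗ[A] SSplit A n a,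
      ∀ (w : Hyperoct n) (x : MonoidAlgebra A (Hyperoct n)),
        e (MonoidAlgebra.single w 1 * x) = ρ w (e x) := by
  classical
  rcases subsingleton_or_nontrivial A with hA | hA
  · have i1 := Module.subsingleton A (MonoidAlgebra A (Hyperoct n))
    have i2 := Module.subsingleton A (SSplit A n a)
    exact ⟨{ (0 : MonoidAlgebra A (Hyperoct n) →ₗ[A] SSplit A n a) with
      invFun := 0
      left_inv := fun _ => Subsingleton.elim _ _
      right_inv := fun _ => Subsingleton.elim _ _ }, fun _ _ => Subsingleton.elim _ _⟩
  obtain ⟨b, hb⟩ := exists_gen_B A n a h2 hn ρ hρ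
  let ρ' : Hyperoct n →* Module.End A (SSplit A n a) :=
    { toFun := fun w => (ρ w).toLinearMap
      map_one' := by rw [map_one]; rfl
      map_mul' := fun w w' => by rw [map_mul]; rfl }
  let T := MonoidAlgebra.lift A (Module.End A (SSplit A n a)) (Hyperoct n) ρ'
  let L : MonoidAlgebra A (Hyperoct n) →ₗ[A] SSplit A n a :=
    (LinearMap.applyₗ b) ∘ₗ T.toLinearMap
  have hT : ∀ w, T (MonoidAlgebra.single w 1) = ρ' w := fun w => by
    simp only [T, MonoidAlgebra.lift_single, one_smul]
  have hL : ∀ w x, L (MonoidAlgebra.single w 1 * x) = ρ w (L x) := by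
    intro w x
    change T (MonoidAlgebra.single w 1 * x) b = ρ w (T x b)
    rw [map_mul, hT]
    rfl
  have hsurj : Function.Surjective L := by
    rw [← LinearMap.range_eq_top, eq_top_iff, ← hb, Submodule.span_le]
    rintro _ ⟨w, rfl⟩
    refine ⟨MonoidAlgebra.single w 1, ?_⟩
    change T (MonoidAlgebra.single w 1) b = _
    rw [hT]
    rfl
  obtain ⟨E, _, _, ι, _, bE, π, hc, hπ⟩ := exists_surj A n a
  have : Fintype (Hyperoct n) := Fintype.ofEquiv _ SemidirectProduct.equivProd.symm
  let bM : Module.Basis (Hyperoct n) A (MonoidAlgebra A (Hyperoct n)) :=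
    Module.Basis.ofRepr (MonoidAlgebra.coeffLinearEquiv A)
  have hcard : Fintype.card (Hyperoct n) = 2 ^ n * n.factorial := by
    rw [Fintype.card_congr SemidirectProduct.equivProd, Fintype.card_prod, Fintype.card_fun,
      Fintype.card_perm, Fintype.card_fin, Fintype.card_units_int]
  have f1 := Module.Finite.of_basis bM
  have f2 := Module.Finite.of_basis bE
  have f3 := Module.Free.of_basis bM
  have f4 := Module.Free.of_basis bE
  have hbij := OrzechProperty.bijective_of_surjective_of_finrank_le (π ∘ₗ L) (hπ.comp hsurj)
    (by rw [Module.finrank_eq_card_basis bM, Module.finrank_eq_card_basis bE, hcard, hc])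
  have hinj : Function.Injective L := Function.Injective.of_comp (f := π) (g := L) hbij.1
  exact ⟨LinearEquiv.ofBijective L ⟨hinj, hsurj⟩, hL⟩
end

section
/- The ideal of ℚ[η₁,…,η_n] generated by e_i(η₁²,…,η_n²) for i = 1,…,n−1 together with η₁⋯η_n is a graded complete intersection, and the quotient ring is a finite-dimensional ℚ-vector space of dimension 2^{n−1} · n!. -/
open MvPolynomial

/-- The sequence `e₁(η²),…,e_{n-1}(η²), η₁⋯η_n` in `ℚ[η₁,…,η_n]`. -/
noncomputable def dsplitSeq (n : ℕ) : List (MvPolynomial (Fin n) ℚ) :=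
  (List.ofFn fun i : Fin (n - 1) => esymmSq ℚ n (i.1 + 1)) ++ [∏ i : Fin n, X i]

/-- `f` makes `C` a free `B`-module of rank `d`. -/
def FreeRk {B C : Type*} [CommRing B] [CommRing C] (f : B →+* C) (d : ℕ) : Prop :=
  letI := f.toAlgebra
  Nonempty (Module.Basis (Fin d) B C)

theorem FreeRk.comp {B C D : Type*} [CommRing B] [CommRing C] [CommRing D]
    {f : B →+* C} {g : C →+* D} {d e : ℕ} (hf : FreeRk f d) (hg : FreeRk g e) :
    FreeRk (g.comp f) (d * e) := by
  let := f.toAlgebra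
  let := g.toAlgebra
  let := (g.comp f).toAlgebra
  have : IsScalarTower B C D := IsScalarTower.of_algebraMap_eq (fun _ => rfl)
  obtain ⟨b⟩ := hf
  obtain ⟨c⟩ := hg
  exact ⟨(Module.Basis.smulTower b c).reindex finProdFinEquiv⟩

theorem FreeRk.of_bijective {B C : Type*} [CommRing B] [CommRing C] {f : B →+* C}
    (hf : Function.Bijective f) : FreeRk f 1 := by
  let := f.toAlgebra
  let e : B ≃ₗ[B] C := LinearEquiv.ofBijective (Algebra.linearMap B C) hf
  exact ⟨(Module.Basis.singleton (Fin 1) B).map e⟩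

theorem FreeRk.adjoinRoot {B : Type*} [CommRing B] (g : Polynomial B) (hg : g.Monic) :
    FreeRk (AdjoinRoot.of g) g.natDegree := by
  have h : (AdjoinRoot.of g).toAlgebra = (inferInstance : Algebra B (AdjoinRoot g)) := by
    exact Algebra.algebra_ext _ _ (fun r => rfl)
  unfold FreeRk
  rw [h]
  exact ⟨(AdjoinRoot.powerBasis' hg).basis⟩

theorem esymmSq_zero (A : Type*) [CommRing A] (n : ℕ) : esymmSq A n 0 = 1 := by
  simp [esymmSq]

theorem esymmSq_gt (A : Type*) [CommRing A] {n k : ℕ} (h : n < k) : esymmSq A n k = 0 := by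
  unfold esymmSq
  rw [Finset.powersetCard_eq_empty.2 (by simpa using h)]
  simp

theorem esymmSq_self (A : Type*) [CommRing A] (n : ℕ) :
    esymmSq A n n = (∏ i : Fin n, X i) ^ 2 := by
  unfold esymmSq
  have h : Finset.powersetCard n (Finset.univ : Finset (Fin n)) = {Finset.univ} := by
    have h := Finset.powersetCard_self (Finset.univ : Finset (Fin n))
    rwa [Finset.card_fin] at h
  rw [h]
  simp [Finset.prod_pow]

/-- The map `A[X_0..X_{n-1}] → A[X_0..X_{n-1}]` sending `X_i` to `e_{i+1}(X²)`. -/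
noncomputable def phi (A : Type*) [CommRing A] (n : ℕ) :
    MvPolynomial (Fin n) A →ₐ[A] MvPolynomial (Fin n) A :=
  aeval (fun i => esymmSq A n (i.1 + 1))

/-- `A[t][X_0..X_{n-1}] → A[X_0..X_n]`, `t ↦ X_0`, `X_i ↦ X_{i+1}`. -/
noncomputable def sig (A : Type*) [CommRing A] (n : ℕ) :
    MvPolynomial (Fin n) (Polynomial A) →+* MvPolynomial (Fin (n + 1)) A :=
  eval₂Hom (Polynomial.eval₂RingHom C (X 0)) (fun i => X i.succ)

theorem sig_bijective (A : Type*) [CommRing A] (n : ℕ) : Function.Bijective (sig A n) := by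
  let e : MvPolynomial (Fin (n + 1)) A ≃ₐ[A] MvPolynomial (Fin n) (Polynomial A) :=
    (renameEquiv A (_root_.finSuccEquiv n)).trans (optionEquivRight A (Fin n))
  have h : sig A n = (e.symm : MvPolynomial (Fin n) (Polynomial A) →+* _) := by
    refine MvPolynomial.ringHom_ext' (Polynomial.ringHom_ext' ?_ ?_) ?_
    · ext a : 1
      apply e.injective
      simp [sig, e]
    · apply e.injective
      simp [sig, e]
    · intro i
      apply e.injective
      simp [sig, e]
  rw [h]
  exact e.symm.bijective

theorem esymmSq_succ (A : Type*) [CommRing A] (n k : ℕ) :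
    esymmSq A (n + 1) (k + 1) =
      sig A n (esymmSq _ n (k + 1)) + X 0 ^ 2 * sig A n (esymmSq _ n k) := by
  classical
  have hs : ∀ j, sig A n (esymmSq _ n j) =
      ∑ s ∈ Finset.powersetCard j ((Finset.univ : Finset (Fin n)).map (Fin.succEmb n)),
        ∏ j ∈ s, X j ^ 2 := by
    intro j
    rw [Finset.powersetCard_map]
    simp [esymmSq, sig, map_sum, map_prod]
  rw [hs, hs]
  unfold esymmSq
  have h0 : (0 : Fin (n + 1)) ∉ (Finset.univ : Finset (Fin n)).map (Fin.succEmb n) := by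
    simp
  have hu : (Finset.univ : Finset (Fin (n + 1))) =
      insert 0 ((Finset.univ : Finset (Fin n)).map (Fin.succEmb n)) := by
    ext i
    refine Fin.cases ?_ (fun i => ?_) i <;> simp
  rw [hu, Finset.powersetCard_succ_insert h0, Finset.sum_union, Finset.sum_image, Finset.mul_sum]
  · congr 1
    apply Finset.sum_congr rfl
    intro s hs
    rw [Finset.prod_insert]
    exact fun h => h0 ((Finset.mem_powersetCard.1 hs).1 h)
  · intro s hs t ht hst
    have h1 : (0 : Fin (n + 1)) ∉ s := fun h => h0 ((Finset.mem_powersetCard.1 hs).1 h)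
    have h2 : (0 : Fin (n + 1)) ∉ t := fun h => h0 ((Finset.mem_powersetCard.1 ht).1 h)
    rw [← Finset.erase_insert h1, ← Finset.erase_insert h2]
    exact congrArg (fun u => Finset.erase u 0) hst
  · rw [Finset.disjoint_left]
    intro s hs hs'
    obtain ⟨t, _, rfl⟩ := Finset.mem_image.1 hs'
    exact h0 ((Finset.mem_powersetCard.1 hs).1 (Finset.mem_insert_self _ _))

/-- Formal elementary symmetric polynomials: `1, X_0, …, X_{n-1}, 0, 0, …`. -/
noncomputable def Eg (A : Type*) [CommRing A] (n : ℕ) : ℕ → MvPolynomial (Fin n) A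
  | 0 => 1
  | k + 1 => if h : k < n then X ⟨k, h⟩ else 0

theorem phi_Eg (A : Type*) [CommRing A] (n k : ℕ) : phi A n (Eg A n k) = esymmSq A n k := by
  cases k with
  | zero => simp [Eg, esymmSq_zero]
  | succ k =>
    by_cases h : k < n
    · simp [Eg, h, phi]
    · simp [Eg, h, esymmSq_gt A (show n < k + 1 by omega)]

/-- The map `A[Y_0..Y_n] → A[t][E_0..E_{n-1}]`. -/
noncomputable def psi (A : Type*) [CommRing A] (n : ℕ) :
    MvPolynomial (Fin (n + 1)) A →+* MvPolynomial (Fin n) (Polynomial A) :=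
  eval₂Hom (C.comp Polynomial.C)
    (fun i => Eg _ n (i.1 + 1) + C Polynomial.X ^ 2 * Eg _ n i.1)

theorem phi_succ (A : Type*) [CommRing A] (n : ℕ) :
    (phi A (n + 1) : MvPolynomial (Fin (n + 1)) A →+* MvPolynomial (Fin (n + 1)) A) =
      (sig A n).comp ((phi (Polynomial A) n : _ →+* _).comp (psi A n)) := by
  apply MvPolynomial.ringHom_ext
  · intro a
    simp [phi, psi, sig]
  · intro i
    have h : psi A n (X i) = Eg _ n (i.1 + 1) + C Polynomial.X ^ 2 * Eg _ n i.1 := by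
      simp [psi]
    have h2 : phi A (n + 1) (X i) = esymmSq A (n + 1) (i.1 + 1) := by simp [phi]
    have h3 : phi (Polynomial A) n (C Polynomial.X) = C Polynomial.X := by simp [phi]
    simp only [RingHom.coe_coe, RingHom.comp_apply, h, h2, map_add, map_mul, phi_Eg, map_pow, h3]
    rw [esymmSq_succ]
    simp [sig]

/-- The recursively defined `r_k` over `A[Y_0..Y_n]`. -/
noncomputable def rr (A : Type*) [CommRing A] (n : ℕ) :
    ℕ → Polynomial (MvPolynomial (Fin (n + 1)) A)
  | 0 => 1
  | k + 1 => Polynomial.C (Eg A (n + 1) (k + 1)) - Polynomial.X ^ 2 * rr A n k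

theorem rr_monic (A : Type*) [CommRing A] [Nontrivial A] (n k : ℕ) :
    ((-1) ^ k * rr A n k).Monic ∧ ((-1) ^ k * rr A n k).natDegree = 2 * k := by
  induction k with
  | zero => simp [rr]
  | succ k ih =>
    obtain ⟨h1, h2⟩ := ih
    have e : (-1) ^ (k + 1) * rr A n (k + 1) =
        Polynomial.X ^ 2 * ((-1) ^ k * rr A n k) +
          Polynomial.C ((-1) ^ (k + 1) * Eg A (n + 1) (k + 1)) := by
      rw [rr]
      simp only [map_mul, map_pow, map_neg, map_one]
      ring
    have hm : (Polynomial.X ^ 2 * ((-1) ^ k * rr A n k)).Monic :=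
      (Polynomial.monic_X_pow 2).mul h1
    have hd : (Polynomial.X ^ 2 * ((-1) ^ k * rr A n k)).natDegree = 2 * (k + 1) := by
      rw [(Polynomial.monic_X_pow 2).natDegree_mul h1, h2, Polynomial.natDegree_X_pow]
      ring
    rw [e]
    constructor
    · apply hm.add_of_left
      apply lt_of_le_of_lt Polynomial.degree_C_le
      rw [Polynomial.degree_eq_natDegree hm.ne_zero, hd]
      exact_mod_cast Nat.succ_pos _
    · rw [Polynomial.natDegree_add_C, hd]

theorem psi_free (A : Type*) [CommRing A] [Nontrivial A] (n : ℕ) :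
    FreeRk (psi A n) (2 * (n + 1)) := by
  obtain ⟨hm, hd⟩ := rr_monic A n (n + 1)
  set g := (-1) ^ (n + 1) * rr A n (n + 1) with hg
  have hev : ∀ k, k ≤ n + 1 → (rr A n k).eval₂ (psi A n) (C Polynomial.X) = Eg _ n k := by
    intro k
    induction k with
    | zero => intro _; simp [rr, Eg]
    | succ k ih =>
      intro hk
      have hk' : k < n + 1 := by omega
      have h : psi A n (Eg A (n + 1) (k + 1)) =
          Eg _ n (k + 1) + C Polynomial.X ^ 2 * Eg _ n k := by
        simp [psi, Eg, hk']
      rw [rr, Polynomial.eval₂_sub, Polynomial.eval₂_mul, Polynomial.eval₂_C, h, ih (by omega)]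
      simp
  have hE : Eg (Polynomial A) n (n + 1) = 0 := by simp [Eg]
  have hg0 : g.eval₂ (psi A n) (C Polynomial.X) = 0 := by
    rw [hg, Polynomial.eval₂_mul, hev _ le_rfl, hE, mul_zero]
  let α : AdjoinRoot g →+* MvPolynomial (Fin n) (Polynomial A) :=
    AdjoinRoot.lift (psi A n) (C Polynomial.X) hg0
  let β : MvPolynomial (Fin n) (Polynomial A) →+* AdjoinRoot g :=
    eval₂Hom (Polynomial.eval₂RingHom ((AdjoinRoot.of g).comp C) (AdjoinRoot.root g))
      (fun i => AdjoinRoot.mk g (rr A n (i.1 + 1)))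
  have hαβ : α.comp β = RingHom.id _ := by
    refine MvPolynomial.ringHom_ext' (Polynomial.ringHom_ext' ?_ ?_) ?_
    · ext a : 1
      simp [α, β, psi]
    · simp [α, β]
    · intro i
      have h1 : β (X i) = AdjoinRoot.mk g (rr A n (i.1 + 1)) := by simp [β]
      rw [RingHom.comp_apply, h1]
      simp only [α, AdjoinRoot.lift_mk]
      rw [hev _ (by omega)]
      simp [Eg]
  have hr0 : AdjoinRoot.mk g (rr A n (n + 1)) = 0 := by
    rw [AdjoinRoot.mk_eq_zero]
    refine ⟨(-1) ^ (n + 1), ?_⟩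
    rw [hg, mul_comm _ (rr A n (n + 1)), mul_assoc, ← mul_pow]
    simp
  have hβE : ∀ k, k ≤ n + 1 → β (Eg _ n k) = AdjoinRoot.mk g (rr A n k) := by
    intro k hk
    cases k with
    | zero => simp [Eg, rr]
    | succ k =>
      by_cases h : k < n
      · simp [Eg, h, β]
      · have : k = n := by omega
        subst this
        rw [hr0, hE, map_zero]
  have hβα : β.comp α = RingHom.id _ := by
    refine AdjoinRoot.ringHom_ext (MvPolynomial.ringHom_ext ?_ ?_) ?_
    · intro a
      simp [α, β, psi]
    · intro i
      have h1 : α (AdjoinRoot.of g (X i)) =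
          Eg _ n (i.1 + 1) + C Polynomial.X ^ 2 * Eg _ n i.1 := by
        simp [α, psi]
      have h2 : β (C Polynomial.X) = AdjoinRoot.mk g Polynomial.X := by simp [β]
      simp only [RingHom.comp_apply, h1, map_add, map_mul, map_pow, h2]
      rw [hβE _ (by omega), hβE _ (by omega), rr]
      simp [Eg, Nat.lt_succ_iff.1 i.2]
    · simp [α, β]
  have hbij : Function.Bijective α :=
    Function.bijective_iff_has_inverse.2 ⟨β, fun x => congrArg (fun f => f x) hβα,
      fun x => congrArg (fun f => f x) hαβ⟩
  have hcomp : psi A n = α.comp (AdjoinRoot.of g) := by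
    ext1 <;> simp [α]
  have := (FreeRk.adjoinRoot g hm).comp (FreeRk.of_bijective hbij)
  rw [hcomp, ← hd]
  simpa using this

theorem phi_free (n : ℕ) : ∀ (A : Type) [CommRing A] [Nontrivial A],
    FreeRk (phi A n : MvPolynomial (Fin n) A →+* MvPolynomial (Fin n) A)
      (2 ^ n * n.factorial) := by
  induction n with
  | zero =>
    intro A _ _
    have h : (phi A 0 : MvPolynomial (Fin 0) A →+* MvPolynomial (Fin 0) A) = RingHom.id _ := by
      apply MvPolynomial.ringHom_ext
      · intro a; simp [phi]
      · intro i; exact i.elim0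
    rw [h]
    simpa using FreeRk.of_bijective (f := RingHom.id (MvPolynomial (Fin 0) A))
      Function.bijective_id
  | succ n ih =>
    intro A _ _
    rw [phi_succ]
    have := ((psi_free A n).comp (ih (Polynomial A))).comp
      (FreeRk.of_bijective (sig_bijective A n))
    convert this using 1
    rw [Nat.factorial_succ]
    ring

open RingTheory.Sequence in
theorem FreeRk.isWeaklyRegular {B C : Type*} [CommRing B] [CommRing C] {f : B →+* C} {d : ℕ}
    (hf : FreeRk f d) {rs : List B} (h : IsWeaklyRegular B rs) :
    IsWeaklyRegular C (rs.map f) := by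
  let _ := f.toAlgebra
  obtain ⟨b⟩ := hf
  have : Module.Free B C := Module.Free.of_basis b
  exact h.of_flat

theorem FreeRk.finrank_quot {K B C : Type*} [Field K] [CommRing B] [CommRing C]
    [Algebra K B] [Algebra K C] {f : B →ₐ[K] C} {d : ℕ} (hf : FreeRk (f : B →+* C) d)
    (ε : B →ₐ[K] K) :
    Module.finrank K (C ⧸ (RingHom.ker ε).map (f : B →+* C)) = d := by
  let _ := (f : B →+* C).toAlgebra
  have hsm : ∀ (r : B) (c : C), r • c = f r * c := fun r c => rfl
  obtain ⟨b⟩ := hf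
  have : IsScalarTower K B C := IsScalarTower.of_algebraMap_eq (fun k => (f.commutes k).symm)
  let L : C →ₗ[K] (Fin d → K) :=
    { toFun := fun c i => ε (b.repr c i)
      map_add' := fun x y => by ext i; simp
      map_smul' := fun k x => by
        ext i
        rw [← algebraMap_smul B k x, map_smul]
        simp }
  have hLs : Function.Surjective L := by
    intro v
    refine ⟨∑ i, algebraMap K B (v i) • b i, ?_⟩
    ext i
    simp only [L, LinearMap.coe_mk, AddHom.coe_mk]
    rw [b.repr_sum_self]
    simp
  have hker : LinearMap.ker L =
      ((RingHom.ker ε).map (f : B →+* C)).restrictScalars K := by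
    ext c
    rw [LinearMap.mem_ker, Submodule.restrictScalars_mem]
    constructor
    · intro h
      rw [← b.sum_repr c]
      refine Ideal.sum_mem _ fun i _ => ?_
      rw [hsm]
      refine Ideal.mul_mem_right _ _ (Ideal.mem_map_of_mem (f : B →+* C) ?_)
      exact congrFun h i
    · intro h
      suffices hc : ∀ z : C, L (c * z) = 0 by simpa using hc 1
      refine Submodule.span_induction (p := fun c _ => ∀ z : C, L (c * z) = 0) ?_ ?_ ?_ ?_ h
      · rintro _ ⟨a, ha, rfl⟩ z
        have ha' : ε a = 0 := ha
        ext i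
        have : (f : B →+* C) a * z = a • z := by rw [hsm]; simp
        simp only [L, LinearMap.coe_mk, AddHom.coe_mk]
        rw [this, map_smul]
        simp [ha']
      · intro z
        rw [zero_mul, map_zero]
      · intro x y _ _ hx hy z
        rw [add_mul, map_add, hx, hy, add_zero]
      · intro a x _ hx z
        rw [smul_eq_mul, mul_comm a x, mul_assoc]
        exact hx _
  have e1 := (Submodule.Quotient.restrictScalarsEquiv K
    ((RingHom.ker ε).map (f : B →+* C))).finrank_eq
  have e2 := (Submodule.quotEquivOfEq _ _ hker).finrank_eq
  have e3 := (L.quotKerEquivOfSurjective hLs).finrank_eq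
  rw [← e1, ← e2, e3]
  simp

open RingTheory.Sequence in
theorem X_regular (n : ℕ) :
    IsWeaklyRegular (MvPolynomial (Fin n) ℚ)
      (List.ofFn (fun i : Fin n => (X i : MvPolynomial (Fin n) ℚ))) := by
  constructor
  intro i hi
  have hi' : i < n := by simpa using hi
  have hI : (Ideal.ofList ((List.ofFn (fun i : Fin n => (X i : MvPolynomial (Fin n) ℚ))).take i)) =
      Ideal.span (X '' {j : Fin n | j.1 < i}) := by
    unfold Ideal.ofList
    congr 1
    ext p
    simp only [Set.mem_ofPred_eq, List.mem_take_iff_getElem, List.getElem_ofFn, Set.mem_image]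
    constructor
    · rintro ⟨j, hj, rfl⟩
      simp at hj
      exact ⟨⟨j, by omega⟩, hj.1, rfl⟩
    · rintro ⟨j, hj, rfl⟩
      exact ⟨j.1, by simp [hj], rfl⟩
  rw [hI, smul_eq_mul, Ideal.mul_top]
  rw [isSMulRegular_quotient_iff_mem_of_smul_mem]
  intro p hp
  rw [mem_ideal_span_X_image] at hp ⊢
  intro m hm
  rw [List.getElem_ofFn, smul_eq_mul] at hp
  obtain ⟨j, hj, hne⟩ := hp (m + Finsupp.single ⟨i, hi'⟩ 1) (by
    rw [mem_support_iff] at hm ⊢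
    rwa [add_comm, coeff_X_mul])
  refine ⟨j, hj, ?_⟩
  have : (⟨i, hi'⟩ : Fin n) ≠ j := by
    rintro rfl
    simp at hj
  simpa [Finsupp.single_apply, this] using hne

theorem finrank_half {K R : Type*} [Field K] [CommRing R] [Algebra K R] (J : Ideal R) (y : R)
    (hy : ∀ r, y * r ∈ J → r ∈ J) (d : ℕ) (hd0 : d ≠ 0)
    (hd : Module.finrank K (R ⧸ (J ⊔ Ideal.span {y ^ 2})) = 2 * d) :
    Module.finrank K (R ⧸ (J ⊔ Ideal.span {y})) = d := by
  set I2 := J ⊔ Ideal.span {y ^ 2} with hI2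
  set I1 := J ⊔ Ideal.span {y} with hI1
  have hle : I2 ≤ I1 := by
    refine sup_le_sup_left ?_ _
    rw [Ideal.span_singleton_le_span_singleton]
    exact ⟨y, by ring⟩
  have hfin : Module.Finite K (R ⧸ I2) := Module.finite_of_finrank_pos (by omega)
  let F : (R ⧸ I2) →ₗ[K] (R ⧸ I1) := (Ideal.Quotient.factorₐ K hle).toLinearMap
  let m : (R ⧸ I2) →ₗ[K] (R ⧸ I2) := LinearMap.mulLeft K (Ideal.Quotient.mk I2 y)
  have hF : Function.Surjective F := Ideal.Quotient.factor_surjective hle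
  have mem1 : ∀ r, r ∈ I1 ↔ ∃ a, r - y * a ∈ J := by
    intro r
    rw [hI1, Submodule.mem_sup]
    constructor
    · rintro ⟨j, hj, z, hz, rfl⟩
      obtain ⟨a, rfl⟩ := Ideal.mem_span_singleton'.1 hz
      exact ⟨a, by convert hj using 1; ring⟩
    · rintro ⟨a, ha⟩
      exact ⟨_, ha, y * a, Ideal.mul_mem_right _ _ (Ideal.mem_span_singleton_self y), by ring⟩
  have mem2 : ∀ r, r ∈ I2 ↔ ∃ a, r - y ^ 2 * a ∈ J := by
    intro r
    rw [hI2, Submodule.mem_sup]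
    constructor
    · rintro ⟨j, hj, z, hz, rfl⟩
      obtain ⟨a, rfl⟩ := Ideal.mem_span_singleton'.1 hz
      exact ⟨a, by convert hj using 1; ring⟩
    · rintro ⟨a, ha⟩
      exact ⟨_, ha, y ^ 2 * a, Ideal.mul_mem_right _ _ (Ideal.mem_span_singleton_self _), by ring⟩
  have hFker : ∀ r, F (Ideal.Quotient.mk I2 r) = 0 ↔ r ∈ I1 := fun r =>
    Ideal.Quotient.eq_zero_iff_mem
  have hmker : ∀ r, m (Ideal.Quotient.mk I2 r) = 0 ↔ y * r ∈ I2 := by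
    intro r
    rw [← Ideal.Quotient.eq_zero_iff_mem, map_mul]
    rfl
  have k1 : LinearMap.ker m = LinearMap.ker F := by
    ext x
    obtain ⟨r, rfl⟩ := Ideal.Quotient.mk_surjective x
    rw [LinearMap.mem_ker, LinearMap.mem_ker, hFker, hmker, mem1, mem2]
    constructor
    · rintro ⟨a, ha⟩
      exact ⟨a, hy _ (by convert ha using 1; ring)⟩
    · rintro ⟨a, ha⟩
      exact ⟨a, by convert J.mul_mem_left y ha using 1; ring⟩
  have k2 : LinearMap.range m = LinearMap.ker F := by
    ext x
    obtain ⟨r, rfl⟩ := Ideal.Quotient.mk_surjective x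
    rw [LinearMap.mem_ker, hFker, mem1, LinearMap.mem_range]
    constructor
    · rintro ⟨s, hs⟩
      obtain ⟨s, rfl⟩ := Ideal.Quotient.mk_surjective s
      have h : Ideal.Quotient.mk I2 (y * s) = Ideal.Quotient.mk I2 r := by
        rw [map_mul]; exact hs
      rw [Ideal.Quotient.eq, mem2] at h
      obtain ⟨a, ha⟩ := h
      exact ⟨s - y * a, by convert J.neg_mem ha using 1; ring⟩
    · rintro ⟨a, ha⟩
      refine ⟨Ideal.Quotient.mk I2 a, ?_⟩
      have h : Ideal.Quotient.mk I2 (y * a) = Ideal.Quotient.mk I2 r := by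
        rw [Ideal.Quotient.eq, mem2]
        exact ⟨0, by convert J.neg_mem ha using 1; ring⟩
      rw [← h, map_mul]
      rfl
  have r1 := LinearMap.finrank_range_add_finrank_ker m
  have r2 := LinearMap.finrank_range_add_finrank_ker F
  rw [LinearMap.range_eq_top.2 hF, finrank_top] at r2
  rw [k1, k2] at r1
  omega

theorem esymmSq_isHomogeneous (A : Type*) [CommRing A] (n i : ℕ) :
    (esymmSq A n i).IsHomogeneous (2 * i) := by
  unfold esymmSq
  refine IsHomogeneous.sum _ _ _ fun s hs => ?_
  have h := IsHomogeneous.prod s (fun j => (X j : MvPolynomial (Fin n) A) ^ 2) (fun _ => 2)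
    (fun j _ => by simpa using (isHomogeneous_X A j).pow 2)
  rw [Finset.sum_const, (Finset.mem_powersetCard.1 hs).2] at h
  simpa [mul_comm] using h

theorem prodX_isHomogeneous (A : Type*) [CommRing A] (n : ℕ) :
    (∏ i : Fin n, (X i : MvPolynomial (Fin n) A)).IsHomogeneous n := by
  have h := IsHomogeneous.prod Finset.univ (fun j => (X j : MvPolynomial (Fin n) A)) (fun _ => 1)
    (fun j _ => isHomogeneous_X A j)
  simpa using h

theorem ker_aeval_zero (n : ℕ) :
    RingHom.ker (aeval (fun _ => (0 : ℚ)) : MvPolynomial (Fin n) ℚ →ₐ[ℚ] ℚ) =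
      Ideal.ofList (List.ofFn (fun i : Fin n => (X i : MvPolynomial (Fin n) ℚ))) := by
  have h : {r | r ∈ List.ofFn (fun i : Fin n => (X i : MvPolynomial (Fin n) ℚ))} =
      X '' Set.univ := by
    ext p; simp [List.mem_ofFn]
  ext p
  rw [Ideal.ofList, h, mem_ideal_span_X_image, RingHom.mem_ker]
  have : (aeval (fun _ => (0 : ℚ)) : MvPolynomial (Fin n) ℚ →ₐ[ℚ] ℚ) p = coeff 0 p := by
    rw [← constantCoeff_eq]
    simpa using congrArg (fun f : MvPolynomial (Fin n) ℚ →+* ℚ => f p)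
      (show ((aeval (fun _ => (0 : ℚ)) : MvPolynomial (Fin n) ℚ →ₐ[ℚ] ℚ) : _ →+* ℚ) =
        constantCoeff from MvPolynomial.ringHom_ext (by simp) (by simp))
  rw [this]
  constructor
  · intro h0 m hm
    by_contra! hc
    have : m = 0 := by ext i; exact hc i trivial
    subst this
    exact (mem_support_iff.1 hm) h0
  · intro h0
    by_contra hc
    obtain ⟨i, _, hi⟩ := h0 0 (mem_support_iff.2 hc)
    simp at hi

open RingTheory.Sequence

/-- The ideal of `ℚ[η₁,…,η_n]` generated by `e_i(η₁²,…,η_n²)` for `i = 1,…,n-1` together with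
`η₁⋯η_n` is a graded complete intersection (its generators are homogeneous and form a regular
sequence), and the quotient ring has dimension `2^{n-1}·n!` as a `ℚ`-vector space. -/
theorem dsplit_fiber_complete_intersection (n : ℕ) (hn : 1 ≤ n) :
    (∀ i : Fin (n - 1), (esymmSq ℚ n (i.1 + 1)).IsHomogeneous (2 * (i.1 + 1))) ∧
    (∏ i : Fin n, (X i : MvPolynomial (Fin n) ℚ)).IsHomogeneous n ∧
    RingTheory.Sequence.IsRegular (MvPolynomial (Fin n) ℚ) (dsplitSeq n) ∧
    Module.finrank ℚ
      (MvPolynomial (Fin n) ℚ ⧸ Ideal.span {p | p ∈ dsplitSeq n}) =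
      2 ^ (n - 1) * n.factorial := by
  refine ⟨fun i => esymmSq_isHomogeneous _ _ _, prodX_isHomogeneous _ _, ?_⟩
  obtain ⟨m, rfl⟩ : ∃ m, n = m + 1 := ⟨n - 1, by omega⟩
  set y : MvPolynomial (Fin (m + 1)) ℚ := ∏ i : Fin (m + 1), X i with hy
  set l : List (MvPolynomial (Fin (m + 1)) ℚ) :=
    List.ofFn fun i : Fin m => esymmSq ℚ (m + 1) (i.1 + 1) with hl
  have hseq : dsplitSeq (m + 1) = l ++ [y] := rfl
  have hmap : (List.ofFn (fun i : Fin (m + 1) => (X i : MvPolynomial (Fin (m + 1)) ℚ))).map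
      (phi ℚ (m + 1) : MvPolynomial (Fin (m + 1)) ℚ →+* MvPolynomial (Fin (m + 1)) ℚ) =
        l ++ [y ^ 2] := by
    rw [List.map_ofFn, List.ofFn_succ', List.concat_eq_append]
    congr 1
    · rw [hl]
      congr 1
      ext1 i
      simp [phi]
    · simp [phi, esymmSq_self, hy]
  have hfree := phi_free (m + 1) ℚ
  have hreg := hfree.isWeaklyRegular (X_regular (m + 1))
  have hdim := hfree.finrank_quot (aeval (fun _ => (0 : ℚ)))
  rw [ker_aeval_zero, Ideal.map_ofList, hmap, Ideal.ofList_append, Ideal.ofList_singleton] at hdim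
  rw [hmap, isWeaklyRegular_append_iff, isWeaklyRegular_singleton_iff,
    isSMulRegular_quotient_iff_mem_of_smul_mem] at hreg
  have hynzd : ∀ r, y * r ∈ Ideal.ofList l → r ∈ Ideal.ofList l := by
    intro r hr
    have := hreg.2 r
    rw [smul_eq_mul, smul_eq_mul, Ideal.mul_top] at this
    apply this
    convert Ideal.mul_mem_left _ y hr using 1
    ring
  have hfr : Module.finrank ℚ
      (MvPolynomial (Fin (m + 1)) ℚ ⧸ (Ideal.ofList l ⊔ Ideal.span {y})) =
      2 ^ m * (m + 1).factorial := by
    apply finrank_half _ _ hynzd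
    · positivity
    · rw [hdim]; ring
  have hspan : Ideal.span {p | p ∈ dsplitSeq (m + 1)} = Ideal.ofList l ⊔ Ideal.span {y} := by
    rw [hseq]
    change Ideal.ofList (l ++ [y]) = _
    rw [Ideal.ofList_append, Ideal.ofList_singleton]
  refine ⟨⟨?_, ?_⟩, ?_⟩
  · rw [hseq, isWeaklyRegular_append_iff, isWeaklyRegular_singleton_iff,
      isSMulRegular_quotient_iff_mem_of_smul_mem]
    refine ⟨hreg.1, fun r => ?_⟩
    rw [smul_eq_mul, smul_eq_mul, Ideal.mul_top]
    exact hynzd r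
  · intro htop
    rw [smul_eq_mul, Ideal.mul_top] at htop
    change ⊤ = Ideal.span {p | p ∈ dsplitSeq (m + 1)} at htop
    rw [hspan] at htop
    rw [← htop] at hfr
    have h0 : Module.finrank ℚ (MvPolynomial (Fin (m + 1)) ℚ ⧸
        (⊤ : Ideal (MvPolynomial (Fin (m + 1)) ℚ))) = 0 :=
      Module.finrank_zero_of_subsingleton
    rw [h0] at hfr
    have : 0 < 2 ^ m * (m + 1).factorial := by positivity
    omega
  · rw [hspan]
    exact hfr
end

section
/- Let V be an n-dimensional complex vector space, f : V → V* a skew-symmetric linear map of rank ≤ 2(n−r), and g : V* → V a symmetric linear map of rank ≤ 2r. If 2r > n, then the characteristic polynomial χ(u) of the composition f∘g : V* → V* is divisible by u^{2r−n}, and the quotient χ(u)/u^{2r−n} is a polynomial in u². -/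
open Polynomial

lemma aux_charpoly_neg {n : ℕ} (M : Matrix (Fin n) (Fin n) ℂ) :
    M.charpoly.comp (-X) = (-1) ^ n * (-M).charpoly := by
  apply Polynomial.funext
  intro t
  rw [eval_comp, eval_mul, Matrix.eval_charpoly, Matrix.eval_charpoly]
  have h : Matrix.scalar (Fin n) (eval t (-X)) - M = -(Matrix.scalar (Fin n) t - -M) := by
    ext i j
    by_cases hij : i = j <;> simp [hij] <;> ring
  rw [h, Matrix.det_neg]
  simp

lemma aux_parity {n m : ℕ} (p : ℂ[X]) (hp : p.comp (-X) = (-1) ^ n * p)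
    (hd : X ^ m ∣ p) (hmn : Even (m + n)) : ∃ q : ℂ[X], p = X ^ m * q.comp (X ^ 2) := by
  obtain ⟨s, rfl⟩ := hd
  refine ⟨contract 2 s, ?_⟩
  congr 1
  have hs : s.comp (-X) = s := by
    have h1 : ((-1 : ℂ[X]) ^ m * X ^ m) * s.comp (-X) = ((-1) ^ n * X ^ m) * s := by
      rw [mul_comp, X_pow_comp, neg_pow] at hp
      rw [hp]; ring
    have h2 : (-1 : ℂ[X]) ^ m = (-1) ^ n := by
      rw [neg_one_pow_eq_ite, neg_one_pow_eq_ite]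
      simp only [Nat.even_add.mp hmn]
    rw [h2] at h1
    refine mul_left_cancel₀ ?_ h1
    simp
  rw [← expand_eq_comp_X_pow]
  ext k
  rw [coeff_expand (by norm_num)]
  split_ifs with hk
  · rw [coeff_contract (by norm_num), Nat.div_mul_cancel hk]
  · have h3 := congrArg (fun p => coeff p k) hs
    have h4 : (-X : ℂ[X]) = C (-1) * X := by simp
    simp only [h4, comp_C_mul_X_coeff] at h3
    have : Odd k := by
      rw [← Nat.not_even_iff_odd, even_iff_two_dvd]; exact hk
    rw [this.neg_one_pow] at h3
    linear_combination (-1/2) * h3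

/-- Let `V` be an `n`-dimensional complex vector space, `f : V → V*` skew-symmetric of rank
`≤ 2(n-r)`, and `g : V* → V` symmetric of rank `≤ 2r`, and suppose `2r > n`.  Then the
characteristic polynomial of `f ∘ g : V* → V*` is divisible by `u^{2r-n}`, and the quotient is a
polynomial in `u²`. -/
theorem charpoly_fg_divisible (V : Type*) [AddCommGroup V] [Module ℂ V]
    [FiniteDimensional ℂ V] (n r : ℕ) (hdim : Module.finrank ℂ V = n)
    (hr : n < 2 * r) (hrn : r ≤ n)
    (f : V →ₗ[ℂ] Module.Dual ℂ V) (hf : ∀ v w : V, f v w = -(f w v))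
    (hrkf : Module.finrank ℂ (LinearMap.range f) ≤ 2 * (n - r))
    (g : Module.Dual ℂ V →ₗ[ℂ] V) (hg : ∀ φ ψ : Module.Dual ℂ V, φ (g ψ) = ψ (g φ))
    (hrkg : Module.finrank ℂ (LinearMap.range g) ≤ 2 * r) :
    ∃ q : Polynomial ℂ,
      LinearMap.charpoly (f ∘ₗ g) = X ^ (2 * r - n) * q.comp (X ^ 2) := by
  apply aux_parity (n := n)
  · let b := Module.finBasisOfFinrankEq ℂ V hdim
    have hA : (LinearMap.toMatrix b b.dualBasis f).transpose
        = -LinearMap.toMatrix b b.dualBasis f := by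
      ext i j
      simp [LinearMap.toMatrix_apply, hf (b i) (b j)]
    have hB : (LinearMap.toMatrix b.dualBasis b g).transpose
        = LinearMap.toMatrix b.dualBasis b g := by
      ext i j
      have := hg (b.coord j) (b.coord i)
      simpa [LinearMap.toMatrix_apply] using this
    rw [← LinearMap.charpoly_toMatrix (f ∘ₗ g) b.dualBasis,
      LinearMap.toMatrix_comp b.dualBasis b b.dualBasis, aux_charpoly_neg]
    congr 1
    rw [← Matrix.charpoly_transpose, Matrix.transpose_neg, Matrix.transpose_mul, hA, hB,
      Matrix.mul_neg, neg_neg, Matrix.charpoly_mul_comm]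
  · have h1 := LinearMap.finrank_eigenspace_le (f ∘ₗ g) 0
    rw [Module.End.eigenspace_zero] at h1
    have h2 := LinearMap.finrank_range_add_finrank_ker (f ∘ₗ g)
    rw [Subspace.dual_finrank_eq, hdim] at h2
    have h3 := Submodule.finrank_mono (LinearMap.range_comp_le_range g f)
    have h4 := pow_rootMultiplicity_dvd (LinearMap.charpoly (f ∘ₗ g)) 0
    rw [C_0, sub_zero] at h4
    exact (pow_dvd_pow X (by omega)).trans h4
  · rw [Nat.sub_add_cancel hr.le]; exact even_two_mul r
end
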